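/- There is a constant c > 0 such that for all d ≥ 2, the maximal number of facets of a 0-1 polytope in R^d satisfies G(d) ≥ (c · d / log d)^{d/4}. -/

import Mathlib

open MeasureTheory Set Filter
noncomputable section

/-- Euclidean space `ℝ^d`. -/
abbrev E (d : ℕ) := EuclideanSpace ℝ (Fin d)

/-- The vertex set `{0,1}^d` of the unit cube in `ℝ^d`. -/
def cube01 (d : ℕ) : Set (E d) := {x | ∀ i, x i = 0 ∨ x i = 1}

/-- The number of facets ((d-1)-dimensional exposed faces) of `P ⊆ ℝ^d`. -/
def numFacets (d : ℕ) (P : Set (E d)) : ℕ :=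
  Set.ncard {F : Set (E d) | F.Nonempty ∧ IsExposed ℝ P F ∧
    Module.finrank ℝ (vectorSpan ℝ F) = d - 1}

/-- `G(d)`: the maximal number of facets of a full-dimensional 0-1 polytope in `ℝ^d`. -/
def maxFacets01 (d : ℕ) : ℕ :=
  sSup {k | ∃ F : Finset (E d), (↑F : Set (E d)) ⊆ cube01 d ∧
    Module.finrank ℝ (vectorSpan ℝ ((↑F : Set (E d)))) = d ∧
    k = numFacets d (convexHull ℝ (↑F : Set (E d)))}

lemma log_one_add_le_cubic {y : ℝ} (hy : -1 < y) :
    Real.log (1 + y) ≤ y - y ^ 2 / 2 + y ^ 3 / 3 := by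
  have hd : ∀ x : ℝ, -1 < x → HasDerivAt
      (fun x : ℝ => x - x ^ 2 / 2 + x ^ 3 / 3 - Real.log (1 + x)) (x ^ 3 / (1 + x)) x := by
    intro x hx
    have h1 : (1 + x) ≠ 0 := by linarith
    have := ((((hasDerivAt_id x).sub ((hasDerivAt_pow 2 x).div_const 2)).add
      ((hasDerivAt_pow 3 x).div_const 3)).sub
      (((hasDerivAt_id x).const_add 1).log h1))
    refine (this.congr_deriv ?_)
    simp only [id]
    push_cast
    field_simp
    ring
  have hc : ∀ s : Set ℝ, s ⊆ Ioi (-1) → ContinuousOn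
      (fun x : ℝ => x - x ^ 2 / 2 + x ^ 3 / 3 - Real.log (1 + x)) s :=
    fun s hs x hx => (hd x (hs hx)).continuousAt.continuousWithinAt
  rcases le_total 0 y with h | h
  · have hm : MonotoneOn (fun x : ℝ => x - x ^ 2 / 2 + x ^ 3 / 3 - Real.log (1 + x)) (Ici 0) := by
      apply monotoneOn_of_deriv_nonneg (convex_Ici 0)
      · apply hc; intro x hx; simp at *; linarith
      · intro x hx; simp at hx
        exact (hd x (by linarith)).differentiableAt.differentiableWithinAt
      · intro x hx; simp at hx
        rw [(hd x (by linarith)).deriv]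
        have : 0 < 1 + x := by linarith
        positivity
    have := hm (by simp) (show y ∈ Ici 0 from h) h
    simp at this; linarith
  · have hm : AntitoneOn (fun x : ℝ => x - x ^ 2 / 2 + x ^ 3 / 3 - Real.log (1 + x)) (Ioc (-1) 0) := by
      apply antitoneOn_of_deriv_nonpos (convex_Ioc _ _)
      · apply hc; intro x hx; simp at *; linarith
      · intro x hx; simp at hx
        exact (hd x (by linarith)).differentiableAt.differentiableWithinAt
      · intro x hx; simp at hx
        rw [(hd x (by linarith)).deriv]
        have : 0 < 1 + x := by linarith
        apply div_nonpos_of_nonpos_of_nonneg _ this.le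
        have : x ^ 3 = x * x ^ 2 := by ring
        rw [this]
        exact mul_nonpos_of_nonpos_of_nonneg hx.2.le (sq_nonneg x)
    have := hm (show y ∈ Ioc (-1) 0 from ⟨hy, h⟩) (by simp) h
    simp at this; linarith

/-- Young inequality between `log cosh` and the entropy. -/
lemma exp_le_cosh (t : ℝ) {y : ℝ} (h1 : -1 < y) (h2 : y < 1) :
    Real.exp (t * y - (y ^ 2 / 2 + y ^ 4 / 3)) ≤ Real.cosh t := by
  have a1 := log_one_add_le_cubic h1
  have a2 := log_one_add_le_cubic (y := -y) (by linarith)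
  set J := y ^ 2 / 2 + y ^ 4 / 3 with hJ
  have e1 := Real.add_one_le_exp (t - t * y + J - Real.log (1 + y))
  have e2 := Real.add_one_le_exp (-t - t * y + J - Real.log (1 + -y))
  have f1 : Real.exp (t - t * y + J - Real.log (1 + y)) =
      Real.exp t * Real.exp (-(t * y - J)) / (1 + y) := by
    rw [Real.exp_sub, Real.exp_log (by linarith), ← Real.exp_add]; ring_nf
  have f2 : Real.exp (-t - t * y + J - Real.log (1 + -y)) =
      Real.exp (-t) * Real.exp (-(t * y - J)) / (1 + -y) := by
    rw [Real.exp_sub, Real.exp_log (by linarith), ← Real.exp_add]; ring_nf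
  rw [f1, le_div_iff₀ (by linarith)] at e1
  rw [f2, le_div_iff₀ (by linarith)] at e2
  have key : 1 ≤ Real.cosh t * Real.exp (-(t * y - J)) := by
    rw [Real.cosh_eq]
    nlinarith [mul_le_mul_of_nonneg_left a1 (show 0 ≤ 1 + y by linarith),
      mul_le_mul_of_nonneg_left a2 (show 0 ≤ 1 + -y by linarith)]
  rw [Real.exp_neg, ← div_eq_mul_inv, le_div_iff₀ (Real.exp_pos _)] at key
  linarith

/-- The sign of a bit. -/
def sg (b : Bool) : ℝ := if b then 1 else -1

/-- The linear form `∑ ± θ i`. -/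
def lf {d : ℕ} (θ : Fin d → ℝ) (σ : Fin d → Bool) : ℝ := ∑ i, sg (σ i) * θ i

/-- Exponentially tilted weights. -/
def wt {d : ℕ} (θ : Fin d → ℝ) (σ : Fin d → Bool) : ℝ :=
  ∏ i, (Real.exp (sg (σ i) * θ i) / (2 * Real.cosh (θ i)))

lemma sum_prod_bool {d : ℕ} (f : Fin d → Bool → ℝ) :
    ∑ σ : Fin d → Bool, ∏ i, f i (σ i) = ∏ i, (f i true + f i false) := by
  rw [← Fintype.prod_sum]; simp

lemma wt_sum {d : ℕ} (θ : Fin d → ℝ) : ∑ σ, wt θ σ = 1 := by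
  unfold wt
  rw [sum_prod_bool (fun i b => Real.exp (sg b * θ i) / (2 * Real.cosh (θ i)))]
  apply Finset.prod_eq_one
  intro i _
  have := Real.cosh_pos (θ i)
  simp only [sg]
  rw [← add_div, div_eq_one_iff_eq (by positivity), Real.cosh_eq]
  simp; ring

lemma wt_eq {d : ℕ} (θ : Fin d → ℝ) (σ) :
    wt θ σ = Real.exp (lf θ σ) / ∏ i, (2 * Real.cosh (θ i)) := by
  unfold wt lf
  rw [Finset.prod_div_distrib, Real.exp_sum]

lemma wt_nonneg {d : ℕ} (θ : Fin d → ℝ) (σ) : 0 ≤ wt θ σ := by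
  unfold wt
  exact Finset.prod_nonneg fun i _ => by have := Real.cosh_pos (θ i); positivity

lemma hoeffding {d : ℕ} (y : Fin d → ℝ) :
    ((Finset.univ.filter fun σ => ∑ i, y i ^ 2 ≤ lf y σ).card : ℝ) ≤
      2 ^ d * Real.exp (-(∑ i, y i ^ 2) / 2) := by
  have h1 : ((Finset.univ.filter fun σ => ∑ i, y i ^ 2 ≤ lf y σ).card : ℝ) * Real.exp (∑ i, y i ^ 2)
      ≤ ∑ σ, Real.exp (lf y σ) := by
    rw [← nsmul_eq_mul]
    refine (Finset.card_nsmul_le_sum _ (fun σ => Real.exp (lf y σ)) _ ?_).trans ?_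
    · intro σ hσ
      exact Real.exp_le_exp.2 (Finset.mem_filter.1 hσ).2
    · exact Finset.sum_le_sum_of_subset_of_nonneg (Finset.subset_univ _)
        fun _ _ _ => (Real.exp_pos _).le
  have h2 : ∑ σ, Real.exp (lf y σ) ≤ 2 ^ d * Real.exp ((∑ i, y i ^ 2) / 2) := by
    have : ∀ σ, Real.exp (lf y σ) = ∏ i, Real.exp (sg (σ i) * y i) := fun σ => by
      unfold lf; rw [Real.exp_sum]
    simp_rw [this]
    rw [sum_prod_bool (fun i b => Real.exp (sg b * y i)), Finset.sum_div, Real.exp_sum]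
    have : (2:ℝ) ^ d = ∏ i : Fin d, 2 := by simp
    rw [this, ← Finset.prod_mul_distrib]
    apply Finset.prod_le_prod
    · intros; positivity
    · intro i _
      have := Real.cosh_le_exp_half_sq (y i)
      rw [Real.cosh_eq] at this
      simp [sg]; linarith
  have h3 : Real.exp (-(∑ i, y i ^ 2) / 2) * Real.exp (∑ i, y i ^ 2) =
      Real.exp ((∑ i, y i ^ 2) / 2) := by rw [← Real.exp_add]; ring_nf
  have := h1.trans h2
  rw [← h3, ← mul_assoc] at this
  exact le_of_mul_le_mul_right this (Real.exp_pos _)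

lemma sum_pair_mul {α : Type*} [Fintype α] (f g : α → ℝ) :
    ∑ p : α × α, f p.1 * g p.2 = (∑ x, f x) * ∑ x, g x := by
  rw [Fintype.sum_prod_type, Finset.sum_mul_sum]

/-- Hybrid of two bit strings. -/
def hyb {d : ℕ} (k : ℕ) (x x' : Fin d → Bool) : Fin d → Bool :=
  fun i => if i.val < k then x' i else x i

lemma hyb_sum {d : ℕ} (θ : Fin d → ℝ) (k : ℕ) (g : (Fin d → Bool) → ℝ) :
    ∑ p : (Fin d → Bool) × (Fin d → Bool), wt θ p.1 * wt θ p.2 * g (hyb k p.1 p.2) =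
      ∑ x, wt θ x * g x := by
  let e : (Fin d → Bool) × (Fin d → Bool) ≃ (Fin d → Bool) × (Fin d → Bool) :=
    { toFun := fun p => (hyb k p.1 p.2, hyb k p.2 p.1)
      invFun := fun p => (hyb k p.1 p.2, hyb k p.2 p.1)
      left_inv := by
        intro p; ext i <;> simp only [hyb] <;> split_ifs <;> rfl
      right_inv := by
        intro p; ext i <;> simp only [hyb] <;> split_ifs <;> rfl }
  have h : ∀ p : (Fin d → Bool) × (Fin d → Bool), wt θ p.1 * wt θ p.2 * g (hyb k p.1 p.2) =
      wt θ (e p).1 * wt θ (e p).2 * g (e p).1 := by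
    intro p
    have : wt θ p.1 * wt θ p.2 = wt θ (e p).1 * wt θ (e p).2 := by
      unfold wt
      rw [← Finset.prod_mul_distrib, ← Finset.prod_mul_distrib]
      apply Finset.prod_congr rfl
      intro i _
      simp only [e, hyb, Equiv.coe_fn_mk]
      split_ifs
      · ring
      · rfl
    rw [this]; rfl
  rw [Finset.sum_congr rfl fun p _ => h p,
    Equiv.sum_comp e (fun p => wt θ p.1 * wt θ p.2 * g p.1), Fintype.sum_prod_type]
  apply Finset.sum_congr rfl
  intro x _
  have : ∀ y, wt θ x * wt θ y * g x = (wt θ x * g x) * wt θ y := fun y => by ring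
  simp_rw [this]
  rw [← Finset.mul_sum, wt_sum, mul_one]

lemma wt_marginal {d : ℕ} (θ : Fin d → ℝ) (i : Fin d) (b : Bool) :
    ∑ x, wt θ x * (if x i = b then 1 else 0) = Real.exp (sg b * θ i) / (2 * Real.cosh (θ i)) := by
  have h : ∀ x : Fin d → Bool, wt θ x * (if x i = b then 1 else 0) =
      ∏ j, (Real.exp (sg (x j) * θ j) / (2 * Real.cosh (θ j)) *
        (if j = i then (if x j = b then 1 else 0) else 1)) := by
    intro x
    rw [Finset.prod_mul_distrib, Finset.prod_ite_eq' Finset.univ i]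
    simp [wt]
  simp_rw [h]
  rw [sum_prod_bool (fun j c => (Real.exp (sg c * θ j) / (2 * Real.cosh (θ j)) *
        (if j = i then (if c = b then 1 else 0) else 1))),
    Finset.prod_eq_single i]
  · cases b <;> simp
  · intro j _ hj
    have := Real.cosh_pos (θ j)
    simp only [hj, if_false, mul_one, sg]
    rw [← add_div, div_eq_one_iff_eq (by positivity), Real.cosh_eq]
    simp; ring
  · simp

lemma wt_differ {d : ℕ} (θ : Fin d → ℝ) (i : Fin d) (B : ℝ) (hB : B < |θ i|) :
    ∑ p : (Fin d → Bool) × (Fin d → Bool), wt θ p.1 * wt θ p.2 * (if p.1 i ≠ p.2 i then 1 else 0)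
      ≤ 2 * Real.exp (-2 * B) := by
  have h : ∀ p : (Fin d → Bool) × (Fin d → Bool),
      wt θ p.1 * wt θ p.2 * (if p.1 i ≠ p.2 i then (1:ℝ) else 0) =
      (wt θ p.1 * (if p.1 i = true then 1 else 0)) * (wt θ p.2 * (if p.2 i = false then 1 else 0))
      + (wt θ p.1 * (if p.1 i = false then 1 else 0)) *
        (wt θ p.2 * (if p.2 i = true then 1 else 0)) := by
    intro p
    cases h1 : p.1 i <;> cases h2 : p.2 i <;> simp
  simp_rw [h]
  rw [Finset.sum_add_distrib]
  rw [sum_pair_mul (fun x => wt θ x * (if x i = true then 1 else 0))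
      (fun x => wt θ x * (if x i = false then 1 else 0)),
    sum_pair_mul (fun x => wt θ x * (if x i = false then 1 else 0))
      (fun x => wt θ x * (if x i = true then 1 else 0)), wt_marginal, wt_marginal]
  have hc : Real.exp B ≤ 2 * Real.cosh (θ i) := by
    rw [← Real.cosh_abs, Real.cosh_eq]
    have := Real.exp_le_exp.2 hB.le
    have := Real.exp_pos (-|θ i|)
    linarith
  have hp := Real.exp_pos B
  have e1 : Real.exp (sg true * θ i) * Real.exp (sg false * θ i) = 1 := by
    rw [← Real.exp_add]; simp [sg]
  have : Real.exp (sg true * θ i) / (2 * Real.cosh (θ i)) *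
      (Real.exp (sg false * θ i) / (2 * Real.cosh (θ i))) ≤ Real.exp (-2 * B) := by
    rw [div_mul_div_comm, e1, show -2 * B = -(B + B) by ring, Real.exp_neg, Real.exp_add,
      one_div]
    gcongr
  linarith [mul_comm (Real.exp (sg true * θ i) / (2 * Real.cosh (θ i)))
      (Real.exp (sg false * θ i) / (2 * Real.cosh (θ i)))]

lemma hyb_step {d : ℕ} (θ : Fin d → ℝ) (x x' : Fin d → Bool) (k : Fin d) :
    lf θ (hyb (k.val + 1) x x') = lf θ (hyb k.val x x') + (sg (x' k) - sg (x k)) * θ k := by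
  unfold lf
  have : ∀ i, sg (hyb (k.val + 1) x x' i) * θ i = sg (hyb k.val x x' i) * θ i +
      if i = k then (sg (x' k) - sg (x k)) * θ k else 0 := by
    intro i
    by_cases h : i = k
    · subst h; simp [hyb]; ring
    · have h' : i.val ≠ k.val := fun h2 => h (Fin.ext h2)
      have : (i.val < k.val + 1) ↔ i.val < k.val := by omega
      simp [hyb, h, this]
  simp_rw [this]
  rw [Finset.sum_add_distrib]; simp

lemma crossing_pointwise {d : ℕ} (θ : Fin d → ℝ) (s B : ℝ) (x x' : Fin d → Bool)
    (h1 : lf θ x ≤ s) (h2 : s < lf θ x') (h3 : ∀ i, B < |θ i| → x i = x' i) :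
    ∃ k : Fin d, s < lf θ (hyb (k.val + 1) x x') ∧ lf θ (hyb (k.val + 1) x x') ≤ s + 2 * B := by
  have e0 : hyb 0 x x' = x := by ext i; simp [hyb]
  have ed : hyb d x x' = x' := by ext i; simp [hyb]
  have hex : ∃ k, s < lf θ (hyb k x x') := ⟨d, by rwa [ed]⟩
  classical
  have hk := Nat.find_spec hex
  have hkd : Nat.find hex ≤ d := Nat.find_min' hex (by rwa [ed])
  have hk0 : Nat.find hex ≠ 0 := by
    intro h; rw [h, e0] at hk; linarith
  obtain ⟨m, hm⟩ := Nat.exists_eq_succ_of_ne_zero hk0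
  have hmin := Nat.find_min hex (m := m) (by omega)
  rw [hm] at hk
  have hst := hyb_step θ x x' ⟨m, by omega⟩
  refine ⟨⟨m, by omega⟩, hk, ?_⟩
  simp only at hst ⊢
  rw [hst]
  by_cases hxx : x ⟨m, by omega⟩ = x' ⟨m, by omega⟩
  · rw [hxx] at hst
    simp only [sub_self, zero_mul, add_zero] at hst
    exact absurd (hst ▸ hk) hmin
  · have hb : |θ ⟨m, by omega⟩| ≤ B := by
      by_contra hcon
      exact hxx (h3 _ (not_le.1 hcon))
    have : (sg (x' ⟨m, by omega⟩) - sg (x ⟨m, by omega⟩)) * θ ⟨m, by omega⟩ ≤ 2 * B := by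
      have hab := abs_le.1 hb
      unfold sg
      split_ifs <;> linarith [hab.1, hab.2]
    linarith [not_lt.1 hmin]

lemma crossing {d : ℕ} (θ : Fin d → ℝ) (s B : ℝ) (hd : 2 * d * Real.exp (-2 * B) ≤ 1 / 8)
    (hhalf : ∑ x, wt θ x * (if s < lf θ x then 1 else 0) = 1 / 2) :
    1 / 8 ≤ d * ∑ x, wt θ x * (if s < lf θ x ∧ lf θ x ≤ s + 2 * B then 1 else 0) := by
  have hhalf' : ∑ x, wt θ x * (if lf θ x ≤ s then 1 else 0) = 1 / 2 := by
    have : ∀ x, wt θ x * (if lf θ x ≤ s then (1:ℝ) else 0) =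
        wt θ x - wt θ x * (if s < lf θ x then 1 else 0) := by
      intro x
      by_cases h : lf θ x ≤ s
      · simp [h, not_lt.2 h]
      · simp [h, not_le.1 h]
    simp_rw [this]
    rw [Finset.sum_sub_distrib, wt_sum, hhalf]; norm_num
  have hL : ∑ p : (Fin d → Bool) × (Fin d → Bool),
      (wt θ p.1 * (if lf θ p.1 ≤ s then (1:ℝ) else 0)) *
        (wt θ p.2 * (if s < lf θ p.2 then (1:ℝ) else 0)) = 1 / 4 := by
    rw [sum_pair_mul (fun x => wt θ x * (if lf θ x ≤ s then 1 else 0))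
      (fun x => wt θ x * (if s < lf θ x then 1 else 0)), hhalf, hhalf']; norm_num
  have hpt : ∀ p : (Fin d → Bool) × (Fin d → Bool),
      (wt θ p.1 * (if lf θ p.1 ≤ s then (1:ℝ) else 0)) *
        (wt θ p.2 * (if s < lf θ p.2 then (1:ℝ) else 0)) ≤
      (∑ k : Fin d, wt θ p.1 * wt θ p.2 *
        (fun z => if s < lf θ z ∧ lf θ z ≤ s + 2 * B then (1:ℝ) else 0) (hyb (k.val + 1) p.1 p.2)) +
      ∑ i ∈ Finset.univ.filter (fun i => B < |θ i|),
        wt θ p.1 * wt θ p.2 * (if p.1 i ≠ p.2 i then (1:ℝ) else 0) := by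
    intro p
    have hw : 0 ≤ wt θ p.1 * wt θ p.2 := mul_nonneg (wt_nonneg _ _) (wt_nonneg _ _)
    have n1 : ∀ k ∈ (Finset.univ : Finset (Fin d)), 0 ≤ wt θ p.1 * wt θ p.2 *
        (fun z => if s < lf θ z ∧ lf θ z ≤ s + 2 * B then (1:ℝ) else 0)
          (hyb (k.val + 1) p.1 p.2) := by
      intro k _; apply mul_nonneg hw; dsimp only; split_ifs <;> norm_num
    have n2 : ∀ i ∈ Finset.univ.filter (fun i => B < |θ i|),
        0 ≤ wt θ p.1 * wt θ p.2 * (if p.1 i ≠ p.2 i then (1:ℝ) else 0) := by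
      intro k _; apply mul_nonneg hw; split_ifs <;> norm_num
    have s1 := Finset.sum_nonneg n1
    have s2 := Finset.sum_nonneg n2
    by_cases h1 : lf θ p.1 ≤ s
    swap
    · simp only [h1, if_false, mul_zero, zero_mul]; exact add_nonneg s1 s2
    by_cases h2 : s < lf θ p.2
    swap
    · simp only [h2, if_false, mul_zero]; exact add_nonneg s1 s2
    simp only [h1, h2, if_true, mul_one]
    by_cases h3 : ∀ i, B < |θ i| → p.1 i = p.2 i
    · obtain ⟨k, hk1, hk2⟩ := crossing_pointwise θ s B p.1 p.2 h1 h2 h3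
      have := Finset.single_le_sum n1 (Finset.mem_univ k)
      simp only [hk1, hk2, and_self, if_true, mul_one] at this
      exact this.trans (le_add_of_nonneg_right s2)
    · push Not at h3
      obtain ⟨i, hi, hne⟩ := h3
      have := Finset.single_le_sum n2 (Finset.mem_filter.2 ⟨Finset.mem_univ i, hi⟩)
      simp only [hne, ne_eq, not_false_eq_true, if_true, mul_one] at this
      exact this.trans (le_add_of_nonneg_left s1)
  have hsum := Finset.sum_le_sum fun p (_ : p ∈ Finset.univ) => hpt p
  rw [hL, Finset.sum_add_distrib] at hsum
  rw [Finset.sum_comm (t := (Finset.univ : Finset (Fin d))),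
    Finset.sum_comm (t := Finset.univ.filter (fun i => B < |θ i|)),
    Finset.sum_congr rfl fun k _ => hyb_sum θ (k.val + 1)
      (fun z => if s < lf θ z ∧ lf θ z ≤ s + 2 * B then (1:ℝ) else 0),
    Finset.sum_const, Finset.card_univ, Fintype.card_fin, nsmul_eq_mul] at hsum
  have h4 : ∑ i ∈ Finset.univ.filter (fun i => B < |θ i|),
      ∑ p : (Fin d → Bool) × (Fin d → Bool),
        wt θ p.1 * wt θ p.2 * (if p.1 i ≠ p.2 i then (1:ℝ) else 0) ≤ 1 / 8 := by
    calc _ ≤ ∑ i ∈ Finset.univ.filter (fun i => B < |θ i|), 2 * Real.exp (-2 * B) :=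
          Finset.sum_le_sum fun i hi => wt_differ θ i B (Finset.mem_filter.1 hi).2
      _ ≤ ∑ i : Fin d, 2 * Real.exp (-2 * B) :=
          Finset.sum_le_sum_of_subset_of_nonneg (Finset.subset_univ _)
            fun _ _ _ => by positivity
      _ = 2 * d * Real.exp (-2 * B) := by simp; ring
      _ ≤ 1 / 8 := hd
  linarith

lemma exists_tilt {d : ℕ} (θ : Fin d → ℝ) (s : ℝ) (hs : s < ∑ i, |θ i|)
    (h0 : ∑ x, wt (0 : Fin d → ℝ) x * (if s < lf θ x then 1 else 0) < 1 / 2) :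
    ∃ t : ℝ, 0 < t ∧ ∑ x, wt (t • θ) x * (if s < lf θ x then 1 else 0) = 1 / 2 := by
  set g : ℝ → ℝ := fun t => ∑ x, wt (t • θ) x * (if s < lf θ x then 1 else 0) with hg
  have hcont : Continuous g := by
    apply continuous_finsetSum
    intro x _
    apply Continuous.mul _ continuous_const
    unfold wt
    apply continuous_finsetProd
    intro i _
    apply Continuous.div
    · simp only [Pi.smul_apply, smul_eq_mul]; fun_prop
    · simp only [Pi.smul_apply, smul_eq_mul]
      exact continuous_const.mul (Real.continuous_cosh.comp (by fun_prop))
    · intro t; have := Real.cosh_pos ((t • θ) i); positivity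
  have hbig : ∃ T : ℝ, 0 < T ∧ 1 / 2 ≤ g T := by
    have hlim : Tendsto (fun T : ℝ => (2:ℝ) ^ d * Real.exp (-(T * (∑ i, |θ i| - s)))) atTop
        (nhds ((2:ℝ) ^ d * 0)) := by
      apply Tendsto.const_mul
      apply Real.tendsto_exp_neg_atTop_nhds_zero.comp
      exact tendsto_id.atTop_mul_const (by linarith)
    rw [mul_zero] at hlim
    obtain ⟨T, hT1, hT2⟩ := ((hlim.eventually (gt_mem_nhds (show (0:ℝ) < 1 / 2 by norm_num))).and
      (eventually_gt_atTop 0)).exists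
    refine ⟨T, hT2, ?_⟩
    have hle : 1 - g T ≤ (2:ℝ) ^ d * Real.exp (-(T * (∑ i, |θ i| - s))) := by
      rw [← wt_sum (T • θ), hg]
      simp only
      rw [← Finset.sum_sub_distrib]
      have hc : (2:ℝ) ^ d * Real.exp (-(T * (∑ i, |θ i| - s))) =
          ∑ x : Fin d → Bool, Real.exp (-(T * (∑ i, |θ i| - s))) := by simp
      rw [hc]
      apply Finset.sum_le_sum
      intro x _
      by_cases hx : s < lf θ x
      · simp [hx]; positivity
      · simp only [hx, if_false, mul_zero, sub_zero]
        rw [wt_eq, div_le_iff₀ (Finset.prod_pos fun i _ => by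
          have := Real.cosh_pos ((T • θ) i); positivity)]
        have hl : lf (T • θ) x = T * lf θ x := by
          unfold lf; rw [Finset.mul_sum]
          exact Finset.sum_congr rfl fun i _ => by simp; ring
        have h2 : Real.exp (T * ∑ i, |θ i|) ≤ ∏ i, (2 * Real.cosh ((T • θ) i)) := by
          rw [Finset.mul_sum, Real.exp_sum]
          apply Finset.prod_le_prod
          · intros; positivity
          · intro i _
            rw [← Real.cosh_abs, Real.cosh_eq]
            simp only [Pi.smul_apply, smul_eq_mul, abs_mul, abs_of_pos hT2]
            have := Real.exp_pos (-(T * |θ i|))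
            linarith
        calc Real.exp (lf (T • θ) x) ≤ Real.exp (T * s) := by
              rw [hl]; apply Real.exp_le_exp.2
              exact mul_le_mul_of_nonneg_left (not_lt.1 hx) hT2.le
          _ = Real.exp (-(T * (∑ i, |θ i| - s))) * Real.exp (T * ∑ i, |θ i|) := by
              rw [← Real.exp_add]; ring_nf
          _ ≤ _ := by gcongr
    linarith
  obtain ⟨T, hT, hgT⟩ := hbig
  have hg0 : g 0 ≤ 1 / 2 := by simp only [hg, zero_smul]; exact h0.le
  obtain ⟨t, ht, hgt⟩ := intermediate_value_Icc hT.le hcont.continuousOn ⟨hg0, hgT⟩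
  refine ⟨t, lt_of_le_of_ne ht.1 ?_, hgt⟩
  rintro rfl
  simp only [hg, zero_smul] at hgt
  linarith

/-- Lower bound for the measure of the halfspaces through a point `p`. -/
lemma halfspace_lower {d : ℕ} (hd : 3 ≤ d) (θ p : Fin d → ℝ) (hθ : θ ≠ 0)
    (hp : ∀ i, |p i| < 1) :
    (2:ℝ) ^ d * (Real.exp (-∑ i, (p i ^ 2 / 2 + p i ^ 4 / 3)) / (8 * (d:ℝ) ^ 5)) ≤
      ((Finset.univ.filter fun σ => ∑ i, p i * θ i < lf θ σ).card : ℝ) := by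
  set s := ∑ i, p i * θ i with hs
  set J := ∑ i, (p i ^ 2 / 2 + p i ^ 4 / 3) with hJ
  have hJ0 : 0 ≤ J := Finset.sum_nonneg fun i _ => by positivity
  have hd3 : (3:ℝ) ≤ d := by exact_mod_cast hd
  have hcard : ((Finset.univ.filter fun σ => s < lf θ σ).card : ℝ) =
      ∑ x : Fin d → Bool, (if s < lf θ x then (1:ℝ) else 0) := by simp
  by_cases h0 : ∑ x, wt (0 : Fin d → ℝ) x * (if s < lf θ x then 1 else 0) < 1 / 2
  swap
  · have hw : ∀ x : Fin d → Bool, wt (0 : Fin d → ℝ) x = (2 ^ d)⁻¹ := by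
      intro x; simp [wt]
    simp_rw [hw] at h0
    rw [← Finset.mul_sum, ← hcard, not_lt, inv_mul_eq_div, le_div_iff₀ (by positivity)] at h0
    refine le_trans ?_ h0
    rw [mul_comm]
    refine mul_le_mul_of_nonneg_right ?_ (by positivity)
    rw [div_le_iff₀ (by positivity)]
    have : Real.exp (-J) ≤ 1 := Real.exp_le_one_iff.2 (by linarith)
    have : (1:ℝ) ≤ (d:ℝ) ^ 5 := one_le_pow₀ (by linarith)
    linarith
  have hsl : s < ∑ i, |θ i| := by
    obtain ⟨j, hj⟩ := Function.ne_iff.1 hθ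
    apply Finset.sum_lt_sum
    · intro i _
      calc p i * θ i ≤ |p i| * |θ i| := by rw [← abs_mul]; exact le_abs_self _
        _ ≤ 1 * |θ i| := by gcongr; exact (hp i).le
        _ = |θ i| := one_mul _
    · refine ⟨j, Finset.mem_univ _, ?_⟩
      have : 0 < |θ j| := abs_pos.2 hj
      calc p j * θ j ≤ |p j| * |θ j| := by rw [← abs_mul]; exact le_abs_self _
        _ < 1 * |θ j| := by gcongr; exact (hp j)
        _ = |θ j| := one_mul _
  obtain ⟨t, ht, hhalf⟩ := exists_tilt θ s hsl h0
  have hl : ∀ x, lf (t • θ) x = t * lf θ x := by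
    intro x
    unfold lf; rw [Finset.mul_sum]
    exact Finset.sum_congr rfl fun i _ => by simp; ring
  have hiff : ∀ x, (t * s < lf (t • θ) x) ↔ s < lf θ x := by
    intro x; rw [hl]; exact mul_lt_mul_iff_right₀ ht
  set B := 2 * Real.log d with hB
  have hdpos : (0:ℝ) < d := by linarith
  have hexpB : Real.exp (2 * B) = (d:ℝ) ^ 4 := by
    rw [hB, ← mul_assoc, show (2:ℝ) * 2 = ((4:ℕ):ℝ) by norm_num, Real.exp_nat_mul,
      Real.exp_log hdpos]
  have hcr := crossing (t • θ) (t * s) B (by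
    rw [show -2 * B = -(2 * B) by ring, Real.exp_neg, hexpB]
    rw [← div_eq_mul_inv, div_le_div_iff₀ (by positivity) (by norm_num)]
    have h3 : (27:ℝ) ≤ (d:ℝ) ^ 3 := by
      calc (27:ℝ) = 3 ^ 3 := by norm_num
        _ ≤ _ := by gcongr
    nlinarith) (by simp_rw [hiff]; exact hhalf)
  have hprod : Real.exp (t * s - J) ≤ ∏ i, Real.cosh ((t • θ) i) := by
    have : t * s - J = ∑ i, ((t • θ) i * p i - (p i ^ 2 / 2 + p i ^ 4 / 3)) := by
      rw [Finset.sum_sub_distrib, hs, Finset.mul_sum]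
      congr 1
      exact Finset.sum_congr rfl fun i _ => by simp; ring
    rw [this, Real.exp_sum]
    apply Finset.prod_le_prod
    · intros; positivity
    · intro i _
      exact exp_le_cosh _ (abs_lt.1 (hp i)).1 (abs_lt.1 (hp i)).2
  have hterm : ∀ x : Fin d → Bool, wt (t • θ) x *
      (if t * s < lf (t • θ) x ∧ lf (t • θ) x ≤ t * s + 2 * B then 1 else 0) ≤
      (d:ℝ) ^ 4 * Real.exp J / 2 ^ d * (if s < lf θ x then 1 else 0) := by
    intro x
    by_cases hx : s < lf θ x
    swap
    · simp [hx, (hiff x)]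
    simp only [hx, if_true, mul_one]
    by_cases hx2 : t * s < lf (t • θ) x ∧ lf (t • θ) x ≤ t * s + 2 * B
    swap
    · simp only [hx2, if_false, mul_zero]; positivity
    simp only [hx2, if_true, mul_one, and_self]
    rw [wt_eq, Finset.prod_mul_distrib]
    simp only [Finset.prod_const, Finset.card_univ, Fintype.card_fin]
    have hP : 0 < ∏ i, Real.cosh ((t • θ) i) := Finset.prod_pos fun i _ => Real.cosh_pos _
    rw [div_le_div_iff₀ (by positivity) (by positivity)]
    have h1 : Real.exp (lf (t • θ) x) ≤ (d:ℝ) ^ 4 * Real.exp J * Real.exp (t * s - J) := by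
      rw [← hexpB, ← Real.exp_add, ← Real.exp_add]
      apply Real.exp_le_exp.2
      linarith [hx2.2]
    calc Real.exp (lf (t • θ) x) * 2 ^ d
        ≤ ((d:ℝ) ^ 4 * Real.exp J * Real.exp (t * s - J)) * 2 ^ d := by gcongr
      _ ≤ ((d:ℝ) ^ 4 * Real.exp J * ∏ i, Real.cosh ((t • θ) i)) * 2 ^ d := by gcongr
      _ = _ := by ring
  have hS := Finset.sum_le_sum fun x (_ : x ∈ Finset.univ) => hterm x
  rw [← Finset.mul_sum, ← hcard] at hS
  set N := ((Finset.univ.filter fun σ => s < lf θ σ).card : ℝ) with hN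
  have hfin : 1 / 8 ≤ d * ((d:ℝ) ^ 4 * Real.exp J / 2 ^ d * N) := hcr.trans (by gcongr)
  rw [Real.exp_neg]
  have he := Real.exp_pos J
  rw [show (2:ℝ) ^ d * ((Real.exp J)⁻¹ / (8 * (d:ℝ) ^ 5)) =
    2 ^ d / (Real.exp J * (8 * (d:ℝ) ^ 5)) by field_simp]
  rw [div_le_iff₀ (by positivity)]
  rw [show d * ((d:ℝ) ^ 4 * Real.exp J / 2 ^ d * N) = (d:ℝ) ^ 5 * Real.exp J * N / 2 ^ d by ring,
    le_div_iff₀ (by positivity)] at hfin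
  linarith

open Classical in
/-- The family of traces of open halfspaces on the cube. -/
def HS (d : ℕ) : Finset (Finset (Fin d → Bool)) :=
  Finset.univ.filter fun A => ∃ (θ : Fin d → ℝ) (s : ℝ), ∀ σ, σ ∈ A ↔ s < lf θ σ

lemma HS_vcDim (d : ℕ) : (HS d).vcDim ≤ d + 1 := by
  classical
  unfold Finset.vcDim
  apply Finset.sup_le
  intro T hT
  rw [Finset.mem_shatterer] at hT
  by_contra hcon
  push Not at hcon
  let f : T → (Fin d → ℝ) := fun σ i => sg (σ.1 i)
  have hf : ¬ AffineIndependent ℝ f := by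
    intro h
    have h1 := h.card_le_finrank_succ
    have h2 : Module.finrank ℝ (vectorSpan ℝ (Set.range f)) ≤ d := by
      have := Submodule.finrank_le (vectorSpan ℝ (Set.range f))
      simpa using this
    simp at h1
    omega
  obtain ⟨I, c, hc1, hc2⟩ := Convex.radon_partition hf
  obtain ⟨u, hu, hTu⟩ := hT (t := Finset.univ.filter (fun σ => ∃ h : σ ∈ T, (⟨σ, h⟩ : T) ∈ I)) (by
    intro σ hσ
    obtain ⟨h, _⟩ := (Finset.mem_filter.1 hσ).2
    exact h)
  obtain ⟨θ, s, hθ⟩ := (Finset.mem_filter.1 hu).2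
  let g : (Fin d → ℝ) →ₗ[ℝ] ℝ := ∑ i, θ i • LinearMap.proj i
  have hg : ∀ σ : T, g (f σ) = lf θ σ.1 := by
    intro σ
    simp [g, f, lf, mul_comm]
  have hmem : ∀ σ : T, σ ∈ I ↔ s < g (f σ) := by
    intro σ
    rw [hg, ← hθ]
    have : σ.1 ∈ T ∩ u ↔ σ.1 ∈ Finset.univ.filter (fun σ => ∃ h : σ ∈ T, (⟨σ, h⟩ : T) ∈ I) := by
      rw [hTu]
    simp at this
    exact this.symm
  have h1 : c ∈ {v | s < g v} := by
    apply convexHull_min _ (convex_halfSpace_gt g.isLinear s) hc1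
    rintro _ ⟨σ, hσ, rfl⟩
    exact (hmem σ).1 hσ
  have h2 : c ∈ {v | g v ≤ s} := by
    apply convexHull_min _ (convex_halfSpace_le g.isLinear s) hc2
    rintro _ ⟨σ, hσ, rfl⟩
    exact not_lt.1 fun h => hσ ((hmem σ).2 h)
  exact absurd (show s < g c from h1) (not_lt.2 h2)

lemma HS_card (d : ℕ) : (HS d).card ≤ 2 ^ ((d + 1) ^ 2) := by
  classical
  calc (HS d).card ≤ (HS d).shatterer.card := Finset.card_le_card_shatterer _
    _ ≤ ∑ k ∈ Finset.Iic (HS d).vcDim, (Fintype.card (Fin d → Bool)).choose k :=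
        Finset.card_shatterer_le_sum_vcDim
    _ ≤ ∑ k ∈ Finset.Iic (d + 1), (Fintype.card (Fin d → Bool)).choose k :=
        Finset.sum_le_sum_of_subset (Finset.Iic_subset_Iic.2 (HS_vcDim d))
    _ ≤ ∑ k ∈ Finset.Iic (d + 1), (2 ^ d) ^ (d + 1) := by
        apply Finset.sum_le_sum
        intro k hk
        refine (Nat.choose_le_pow _ _).trans ?_
        simp only [Fintype.card_pi, Fintype.card_bool, Finset.prod_const, Finset.card_univ,
          Fintype.card_fin]
        exact Nat.pow_le_pow_right (by positivity) (Finset.mem_Iic.1 hk)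
    _ = (d + 2) * (2 ^ d) ^ (d + 1) := by simp
    _ ≤ 2 ^ (d + 1) * (2 ^ d) ^ (d + 1) := by
        gcongr
        have := Nat.lt_two_pow_self (n := d + 1)
        omega
    _ = _ := by rw [← pow_mul, ← pow_add]; congr 1; ring

lemma card_coord {d n : ℕ} (A : Finset (Fin d → Bool)) (j : Fin n) :
    ((Finset.univ.filter fun ω : Fin n → (Fin d → Bool) => ω j ∈ A).card : ℝ) =
      ((2:ℝ) ^ d) ^ n * (A.card / 2 ^ d) := by
  classical
  have : (Finset.univ.filter fun ω : Fin n → (Fin d → Bool) => ω j ∈ A) =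
      Fintype.piFinset (fun i => if i = j then A else Finset.univ) := by
    ext ω
    simp only [Finset.mem_filter, Finset.mem_univ, true_and, Fintype.mem_piFinset]
    constructor
    · intro h i
      split_ifs with hi
      · rw [hi]; exact h
      · simp
    · intro h; simpa using h j
  rw [this, Fintype.card_piFinset]
  push_cast
  have h2 : ∀ i : Fin n, (((if i = j then A else Finset.univ).card : ℕ) : ℝ) =
      2 ^ d * (if i = j then (A.card / 2 ^ d : ℝ) else 1) := by
    intro i
    split_ifs
    · field_simp
    · simp
  rw [Finset.prod_congr rfl fun i _ => h2 i, Finset.prod_mul_distrib, Finset.prod_ite_eq' ]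
  simp

lemma card_avoid {d n : ℕ} (A : Finset (Fin d → Bool)) (q : ℝ)
    (hq : (2:ℝ) ^ d * q ≤ A.card) :
    ((Finset.univ.filter fun ω : Fin n → (Fin d → Bool) => ∀ j, ω j ∉ A).card : ℝ) ≤
      ((2:ℝ) ^ d) ^ n * Real.exp (-(q * n)) := by
  classical
  have : (Finset.univ.filter fun ω : Fin n → (Fin d → Bool) => ∀ j, ω j ∉ A) =
      Fintype.piFinset (fun _ => Aᶜ) := by
    ext ω; simp
  rw [this, Fintype.card_piFinset]
  simp only [Finset.prod_const, Finset.card_univ, Fintype.card_fin]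
  rw [show -(q * n) = n * (-q) by ring, Real.exp_nat_mul, ← mul_pow]
  push_cast
  apply pow_le_pow_left₀ (by positivity)
  have hcc : ((A.card : ℝ) + Aᶜ.card) = 2 ^ d := by
    have := Finset.card_add_card_compl A
    simp only [Fintype.card_pi, Fintype.card_bool, Finset.prod_const, Finset.card_univ,
          Fintype.card_fin] at this
    exact_mod_cast this
  have := Real.add_one_le_exp (-q)
  have h2 : (0:ℝ) < 2 ^ d := by positivity
  nlinarith

lemma exists_sample {d n : ℕ} {ι : Type*} (Y : Finset ι) (A : ι → Finset (Fin d → Bool))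
    (q ε : ℝ) (hA : ∀ y ∈ Y, ((A y).card : ℝ) ≤ 2 ^ d * ε) (hn : n * ε ≤ 1 / 4)
    (hq : (2:ℝ) ^ ((d + 1) ^ 2) * Real.exp (-(q * n)) ≤ 1 / 4) :
    ∃ ω : Fin n → (Fin d → Bool),
      (∀ H ∈ HS d, (2:ℝ) ^ d * q ≤ H.card → ∃ j, ω j ∈ H) ∧
      ∃ Y' ⊆ Y, Y.card ≤ 2 * Y'.card ∧ ∀ y ∈ Y', ∀ j, ω j ∉ A y := by
  classical
  set Om : ℝ := ((2:ℝ) ^ d) ^ n with hOm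
  have hOm0 : 0 < Om := by positivity
  have hcardOm : ((Finset.univ : Finset (Fin n → (Fin d → Bool))).card : ℝ) = Om := by
    simp [hOm]
  let bad : Finset (Fin n → (Fin d → Bool)) :=
    ((HS d).filter fun H => (2:ℝ) ^ d * q ≤ H.card).biUnion
      fun H => Finset.univ.filter fun ω => ∀ j, ω j ∉ H
  have hbad : (bad.card : ℝ) ≤ Om / 4 := by
    calc (bad.card : ℝ) ≤ ∑ H ∈ ((HS d).filter fun H => (2:ℝ) ^ d * q ≤ H.card),
          ((Finset.univ.filter fun ω : Fin n → (Fin d → Bool) => ∀ j, ω j ∉ H).card : ℝ) := by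
          rw [← Nat.cast_sum]
          exact Nat.cast_le.2 Finset.card_biUnion_le
      _ ≤ ∑ H ∈ ((HS d).filter fun H => (2:ℝ) ^ d * q ≤ H.card), Om * Real.exp (-(q * n)) :=
          Finset.sum_le_sum fun H hH => card_avoid H q (Finset.mem_filter.1 hH).2
      _ = ((HS d).filter fun H => (2:ℝ) ^ d * q ≤ H.card).card * (Om * Real.exp (-(q * n))) := by
          rw [Finset.sum_const, nsmul_eq_mul]
      _ ≤ (2:ℝ) ^ ((d + 1) ^ 2) * (Om * Real.exp (-(q * n))) := by
          gcongr
          exact_mod_cast (Finset.card_le_card (Finset.filter_subset _ _)).trans (HS_card d)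
      _ = Om * ((2:ℝ) ^ ((d + 1) ^ 2) * Real.exp (-(q * n))) := by ring
      _ ≤ Om * (1 / 4) := by gcongr
      _ = _ := by ring
  let f : (Fin n → (Fin d → Bool)) → ℕ := fun ω => (Y.filter fun y => ∃ j, ω j ∈ A y).card
  have hf : ∑ ω, (f ω : ℝ) ≤ Y.card * Om / 4 := by
    have h1 : ∀ ω, (f ω : ℝ) ≤ ∑ y ∈ Y, ∑ j : Fin n, if ω j ∈ A y then (1:ℝ) else 0 := by
      intro ω
      simp only [f, Finset.card_filter]
      push_cast
      apply Finset.sum_le_sum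
      intro y _
      split_ifs with h
      · obtain ⟨j, hj⟩ := h
        have := Finset.single_le_sum (f := fun j => if ω j ∈ A y then (1:ℝ) else 0)
          (fun i _ => by split_ifs <;> norm_num) (Finset.mem_univ j)
        simpa [hj] using this
      · exact Finset.sum_nonneg fun i _ => by split_ifs <;> norm_num
    calc ∑ ω, (f ω : ℝ) ≤ ∑ ω : Fin n → (Fin d → Bool), ∑ y ∈ Y, ∑ j : Fin n,
          if ω j ∈ A y then (1:ℝ) else 0 := Finset.sum_le_sum fun ω _ => h1 ω
      _ = ∑ y ∈ Y, ∑ j : Fin n, ∑ ω : Fin n → (Fin d → Bool),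
          if ω j ∈ A y then (1:ℝ) else 0 := by
          rw [Finset.sum_comm]
          exact Finset.sum_congr rfl fun y _ => Finset.sum_comm
      _ = ∑ y ∈ Y, ∑ j : Fin n, Om * ((A y).card / 2 ^ d) := by
          refine Finset.sum_congr rfl fun y _ => Finset.sum_congr rfl fun j _ => ?_
          rw [← card_coord (A y) j]; simp
      _ ≤ ∑ y ∈ Y, ∑ j : Fin n, Om * ε := by
          refine Finset.sum_le_sum fun y hy => Finset.sum_le_sum fun j _ => ?_
          gcongr
          rw [div_le_iff₀ (by positivity)]
          linarith [hA y hy]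
      _ = Y.card * (Om * (n * ε)) := by
          simp only [Finset.sum_const, Finset.card_univ, Fintype.card_fin, nsmul_eq_mul]; ring
      _ ≤ Y.card * (Om * (1 / 4)) := by gcongr
      _ = _ := by ring
  have hex : ∃ ω, ω ∉ bad ∧ 2 * f ω ≤ Y.card := by
    by_contra hcon
    push Not at hcon
    have h1 : (Finset.univ.filter fun ω => ω ∉ bad).card • (((Y.card : ℝ) + 1) / 2) ≤
        ∑ ω ∈ Finset.univ.filter (fun ω => ω ∉ bad), (f ω : ℝ) := by
      apply Finset.card_nsmul_le_sum
      intro ω hω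
      have := hcon ω (Finset.mem_filter.1 hω).2
      have : ((Y.card + 1 : ℕ) : ℝ) ≤ ((2 * f ω : ℕ) : ℝ) := by exact_mod_cast this
      push_cast at this
      linarith
    have h2 : ∑ ω ∈ Finset.univ.filter (fun ω => ω ∉ bad), (f ω : ℝ) ≤ ∑ ω, (f ω : ℝ) :=
      Finset.sum_le_sum_of_subset_of_nonneg (Finset.subset_univ _) fun _ _ _ => by positivity
    have h3 : ((Finset.univ.filter fun ω => ω ∉ bad).card : ℝ) = Om - bad.card := by
      have : (Finset.univ.filter fun ω => ω ∉ bad) = badᶜ := by ext; simp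
      rw [this, ← hcardOm, Finset.card_univ, ← Finset.card_add_card_compl bad]
      push_cast; ring
    rw [nsmul_eq_mul, h3] at h1
    have hY : (0:ℝ) ≤ Y.card := by positivity
    nlinarith
  obtain ⟨ω, hω, hfω⟩ := hex
  refine ⟨ω, ?_, Y.filter (fun y => ¬ ∃ j, ω j ∈ A y), Finset.filter_subset _ _, ?_, ?_⟩
  · intro H hH hHq
    by_contra hcon
    push Not at hcon
    apply hω
    exact Finset.mem_biUnion.2 ⟨H, Finset.mem_filter.2 ⟨hH, hHq⟩,
      Finset.mem_filter.2 ⟨Finset.mem_univ _, hcon⟩⟩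
  · have := Finset.card_filter_add_card_filter_not (s := Y) (fun y => ∃ j, ω j ∈ A y)
    simp only [f] at hfω
    omega
  · intro y hy j hj
    exact (Finset.mem_filter.1 hy).2 ⟨j, hj⟩

lemma exposed_finite {d : ℕ} (S : Finset (E d)) :
    {F : Set (E d) | IsExposed ℝ (convexHull ℝ (↑S : Set (E d))) F}.Finite := by
  have hK : IsCompact (convexHull ℝ (↑S : Set (E d))) := (S.finite_toSet.isCompact_convexHull ℝ)
  have hc := convex_convexHull ℝ (↑S : Set (E d))
  refine Set.Finite.of_injOn (f := fun F => Set.extremePoints ℝ F) (t := 𝒫 (↑S : Set (E d)))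
    ?_ ?_ S.finite_toSet.finite_subsets
  · intro F hF
    exact (hF.isExtreme.extremePoints_subset_extremePoints).trans extremePoints_convexHull_subset
  · intro F hF G hG h
    have h1 := closure_convexHull_extremePoints (hF.isCompact hK) (hF.convex hc)
    have h2 := closure_convexHull_extremePoints (hG.isCompact hK) (hG.convex hc)
    simp only at h
    rw [← h1, ← h2, h]

lemma numFacets_le_max {d : ℕ} (S : Finset (E d)) (hS : (↑S : Set (E d)) ⊆ cube01 d)
    (hfull : Module.finrank ℝ (vectorSpan ℝ (↑S : Set (E d))) = d) :
    numFacets d (convexHull ℝ (↑S : Set (E d))) ≤ maxFacets01 d := by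
  have hcube : (cube01 d).Finite := by
    have : (Set.pi Set.univ (fun _ : Fin d => ({0, 1} : Set ℝ))).Finite :=
      Set.Finite.pi fun _ => by simp
    refine Set.Finite.subset (this.preimage
      (f := fun x : E d => (x : Fin d → ℝ)) ?_) ?_
    · intro x _ y _ h
      ext i; exact congrFun h i
    · intro x hx
      simp only [Set.mem_preimage, Set.mem_pi]
      intro i _
      exact hx i
  have hfin : {k | ∃ F : Finset (E d), (↑F : Set (E d)) ⊆ cube01 d ∧
    Module.finrank ℝ (vectorSpan ℝ ((↑F : Set (E d)))) = d ∧
    k = numFacets d (convexHull ℝ (↑F : Set (E d)))}.Finite := by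
    refine Set.Finite.subset ((hcube.finite_subsets).image
      (fun A : Set (E d) => numFacets d (convexHull ℝ A))) ?_
    rintro k ⟨F, hF, _, rfl⟩
    exact ⟨↑F, hF, rfl⟩
  exact le_csSup hfin.bddAbove ⟨S, hS, hfull, rfl⟩

lemma full_dim {d : ℕ} (S : Finset (E d)) (o : E d)
    (h_int : ∀ θ : E d, θ ≠ 0 → ∃ s ∈ S, 0 < inner ℝ (s - o) θ) :
    Module.finrank ℝ (vectorSpan ℝ (↑S : Set (E d))) = d := by
  suffices h : vectorSpan ℝ (↑S : Set (E d)) = ⊤ by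
    rw [h, finrank_top]; simp
  rw [← Submodule.orthogonal_eq_bot_iff, Submodule.eq_bot_iff]
  intro η hη
  by_contra hne
  obtain ⟨s1, hs1, h1⟩ := h_int η hne
  obtain ⟨s2, hs2, h2⟩ := h_int (-η) (neg_ne_zero.2 hne)
  have h3 : s1 -ᵥ s2 ∈ vectorSpan ℝ (↑S : Set (E d)) := vsub_mem_vectorSpan ℝ hs1 hs2
  have h4 := (Submodule.mem_orthogonal _ _).1 hη _ h3
  rw [vsub_eq_sub, show s1 - s2 = (s1 - o) - (s2 - o) by abel, inner_sub_left] at h4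
  rw [inner_neg_right] at h2
  linarith

lemma polar_bounded {d : ℕ} (hd : 1 ≤ d) (S : Finset (E d)) (o : E d)
    (h_int : ∀ θ : E d, θ ≠ 0 → ∃ s ∈ S, 0 < inner ℝ (s - o) θ) :
    ∃ C : ℝ, ∀ θ : E d, (∀ s ∈ S, inner ℝ (s - o) θ ≤ 1) → ‖θ‖ ≤ C := by
  have : Nonempty (Fin d) := ⟨⟨0, hd⟩⟩
  have : Nontrivial (E d) := inferInstance
  obtain ⟨v, hv⟩ := exists_ne (0 : E d)
  obtain ⟨s0, hs0, _⟩ := h_int v hv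
  have hne : S.Nonempty := ⟨s0, hs0⟩
  let f : E d → ℝ := fun θ => S.sup' hne fun s => inner ℝ (s - o) θ
  have hf : Continuous f := by
    apply Continuous.finset_sup'_apply
    intro s _
    fun_prop
  obtain ⟨θ0, hθ0, hmin⟩ := (isCompact_sphere (0 : E d) 1).exists_isMinOn
    ((NormedSpace.sphere_nonempty (x := (0 : E d)) (r := 1)).2 zero_le_one) hf.continuousOn
  have hpos : 0 < f θ0 := by
    have : θ0 ≠ 0 := by
      rintro rfl; simp at hθ0
    obtain ⟨s, hs, h⟩ := h_int θ0 this
    exact lt_of_lt_of_le h (Finset.le_sup' (fun s => inner ℝ (s - o) θ0) hs)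
  refine ⟨1 / f θ0, fun θ hθ => ?_⟩
  by_cases h0 : θ = 0
  · rw [h0, norm_zero]; positivity
  have hn : 0 < ‖θ‖ := norm_pos_iff.2 h0
  have hm : ‖θ‖⁻¹ • θ ∈ Metric.sphere (0 : E d) 1 := by
    rw [mem_sphere_zero_iff_norm, norm_smul, norm_inv, norm_norm, inv_mul_cancel₀ hn.ne']
  have h1 : f θ0 ≤ f (‖θ‖⁻¹ • θ) := hmin hm
  have h2 : f (‖θ‖⁻¹ • θ) ≤ ‖θ‖⁻¹ := by
    apply Finset.sup'_le
    intro s hs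
    rw [inner_smul_right]
    calc ‖θ‖⁻¹ * inner ℝ (s - o) θ ≤ ‖θ‖⁻¹ * 1 := by gcongr; exact hθ s hs
      _ = _ := mul_one _
  rw [le_div_iff₀ hpos]
  calc ‖θ‖ * f θ0 ≤ ‖θ‖ * ‖θ‖⁻¹ := by gcongr; exact h1.trans h2
    _ = 1 := mul_inv_cancel₀ hn.ne'

lemma polar_sep {d : ℕ} (S : Finset (E d)) (hne : S.Nonempty) (o b : E d)
    (h_int : ∀ θ : E d, θ ≠ 0 → ∃ s ∈ S, 0 < inner ℝ (s - o) θ)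
    (hb : b ∉ convexHull ℝ (↑S : Set (E d))) :
    ∃ θ : E d, (∀ s ∈ S, inner ℝ (s - o) θ ≤ 1) ∧ 1 < inner ℝ (b - o) θ := by
  obtain ⟨f, u, h1, h2⟩ := geometric_hahn_banach_closed_point (convex_convexHull ℝ (↑S : Set (E d)))
    ((S.finite_toSet.isCompact_convexHull ℝ).isClosed) hb
  set η := (InnerProductSpace.toDual ℝ (E d)).symm f with hη
  have hf : ∀ x, f x = inner ℝ x η := by
    intro x; rw [real_inner_comm, hη, InnerProductSpace.toDual_symm_apply]
  have hS : ∀ s ∈ S, inner ℝ s η < u := fun s hs => by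
    rw [← hf]; exact h1 s (subset_convexHull ℝ _ hs)
  have hη0 : η ≠ 0 := by
    intro h
    obtain ⟨s, hs⟩ := hne
    have := hS s hs
    rw [hf] at h2
    rw [h, inner_zero_right] at this h2
    linarith
  obtain ⟨s, hs, hpos⟩ := h_int η hη0
  have hh : 0 < u - inner ℝ o η := by
    rw [inner_sub_left] at hpos
    linarith [hS s hs]
  refine ⟨(u - inner ℝ o η)⁻¹ • η, fun s hs => ?_, ?_⟩
  · rw [inner_smul_right, inner_sub_left, inv_mul_le_iff₀ hh]
    linarith [hS s hs]
  · rw [inner_smul_right, inner_sub_left, lt_inv_mul_iff₀ hh]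
    rw [hf] at h2
    linarith

lemma facet_exists {d : ℕ} (hd : 1 ≤ d) (S : Finset (E d)) (o w : E d)
    (h_int : ∀ θ : E d, θ ≠ 0 → ∃ s ∈ S, 0 < inner ℝ (s - o) θ)
    (hw : w ∉ convexHull ℝ (↑S : Set (E d))) :
    ∃ (F : Set (E d)) (θ : E d) (t : ℝ), θ ≠ 0 ∧ 0 ≤ t ∧ t ≤ 1 ∧
      IsExposed ℝ (convexHull ℝ (↑S : Set (E d))) F ∧
      Module.finrank ℝ (vectorSpan ℝ F) = d - 1 ∧ o + t • (w - o) ∈ F ∧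
      ∀ x ∈ F, ∀ z ∈ S, inner ℝ z θ ≤ inner ℝ x θ := by
  have : Nonempty (Fin d) := ⟨⟨0, hd⟩⟩
  obtain ⟨v, hv⟩ := exists_ne (0 : E d)
  obtain ⟨s0, hs0, _⟩ := h_int v hv
  have hne : S.Nonempty := ⟨s0, hs0⟩
  set K := convexHull ℝ (↑S : Set (E d)) with hK
  let P : Set (E d) := {θ | ∀ s ∈ S, inner ℝ (s - o) θ ≤ 1}
  have hPclosed : IsClosed P := by
    have : P = ⋂ s ∈ S, {θ : E d | inner ℝ (s - o) θ ≤ 1} := by ext; simp [P]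
    rw [this]
    exact isClosed_biInter fun s _ => isClosed_le (by fun_prop) continuous_const
  obtain ⟨C, hC⟩ := polar_bounded hd S o h_int
  have hPcomp : IsCompact P := by
    apply Metric.isCompact_of_isClosed_isBounded hPclosed
    rw [isBounded_iff_forall_norm_le]
    exact ⟨C, hC⟩
  let l : StrongDual ℝ (E d) := innerSL ℝ (w - o)
  have hl : ∀ θ, l θ = inner ℝ (w - o) θ := fun θ => rfl
  let Q : Set (E d) := {θ | θ ∈ P ∧ ∀ η ∈ P, l η ≤ l θ}
  have hQ : IsExposed ℝ P Q := fun _ => ⟨l, rfl⟩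
  have hP0 : P.Nonempty := ⟨0, fun s _ => by simp⟩
  have hQne : Q.Nonempty := by
    obtain ⟨θ, hθ, hmax⟩ := hPcomp.exists_isMaxOn hP0 l.continuous.continuousOn
    exact ⟨θ, hθ, fun η hη => hmax hη⟩
  obtain ⟨θ, hθQ⟩ := (hQ.isCompact hPcomp).extremePoints_nonempty hQne
  have hθP : θ ∈ Set.extremePoints ℝ P := hQ.isExtreme.extremePoints_subset_extremePoints hθQ
  have hθ2 : θ ∈ Q := hθQ.1
  set M := inner ℝ (w - o) θ with hM
  have hM1 : 1 < M := by
    obtain ⟨η, h1, h2⟩ := polar_sep S hne o w h_int hw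
    have := hθ2.2 η h1
    rw [hl, hl] at this
    linarith
  have hθ0 : θ ≠ 0 := by
    rintro rfl
    rw [inner_zero_right] at hM
    linarith
  set b := o + M⁻¹ • (w - o) with hb
  have hM0 : 0 < M := by linarith
  have hbK : b ∈ K := by
    by_contra hcon
    obtain ⟨η, h1, h2⟩ := polar_sep S hne o b h_int hcon
    have := hθ2.2 η h1
    rw [hl, hl] at this
    rw [hb, add_sub_cancel_left, real_inner_smul_left, lt_inv_mul_iff₀ hM0] at h2
    linarith
  have hKle : ∀ z ∈ K, inner ℝ θ z ≤ 1 + inner ℝ θ o := by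
    intro z hz
    have : K ⊆ {z | (innerSL ℝ θ) z ≤ 1 + inner ℝ θ o} := by
      apply convexHull_min _ (convex_halfSpace_le (innerSL ℝ θ).toLinearMap.isLinear _)
      intro s hs
      have := hθ2.1 s hs
      rw [inner_sub_left] at this
      show inner ℝ θ s ≤ 1 + inner ℝ θ o
      rw [real_inner_comm s, real_inner_comm o]
      linarith
    simpa using this hz
  have hbeq : inner ℝ θ b = 1 + inner ℝ θ o := by
    rw [hb, inner_add_right, inner_smul_right, real_inner_comm (w - o), ← hM, inv_mul_cancel₀ hM0.ne',
      add_comm]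
  let l' : StrongDual ℝ (E d) := innerSL ℝ θ
  have hl' : ∀ x, l' x = inner ℝ θ x := fun x => rfl
  let F : Set (E d) := {x | x ∈ K ∧ ∀ z ∈ K, l' z ≤ l' x}
  have hF : IsExposed ℝ K F := fun _ => ⟨l', rfl⟩
  have hbF : b ∈ F := ⟨hbK, fun z hz => by rw [hl', hl', hbeq]; exact hKle z hz⟩
  have hFeq : ∀ x ∈ F, inner ℝ θ x = 1 + inner ℝ θ o := by
    intro x hx
    have h1 := hx.2 b hbK
    rw [hl', hl', hbeq] at h1
    exact le_antisymm (hKle x hx.1) h1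
  have hspan : Submodule.span ℝ {v | ∃ s ∈ S, inner ℝ (s - o) θ = 1 ∧ v = s - o} = ⊤ := by
    rw [← Submodule.orthogonal_eq_bot_iff, Submodule.eq_bot_iff]
    intro η hη
    by_contra hη0
    have htight : ∀ s ∈ S, inner ℝ (s - o) θ = 1 → inner ℝ (s - o) η = 0 := by
      intro s hs h
      exact (Submodule.mem_orthogonal _ _).1 hη _ (Submodule.subset_span ⟨s, hs, h, rfl⟩)
    have hev : ∀ᶠ ε : ℝ in nhds 0, ∀ s ∈ S, inner ℝ (s - o) (θ + ε • η) ≤ 1 ∧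
        inner ℝ (s - o) (θ - ε • η) ≤ 1 := by
      rw [Filter.eventually_all_finset]
      intro s hs
      rcases eq_or_lt_of_le (hθ2.1 s hs) with h | h
      · refine Filter.Eventually.of_forall fun ε => ?_
        rw [inner_add_right, inner_sub_right, inner_smul_right, htight s hs h, h]
        simp
      · have c1 : Continuous fun ε : ℝ => inner ℝ (s - o) (θ + ε • η) := by fun_prop
        have c2 : Continuous fun ε : ℝ => inner ℝ (s - o) (θ - ε • η) := by fun_prop
        have t1 := c1.tendsto 0
        have t2 := c2.tendsto 0
        simp only [zero_smul, add_zero, sub_zero] at t1 t2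
        filter_upwards [t1.eventually (gt_mem_nhds h), t2.eventually (gt_mem_nhds h)] with ε a1 a2
        exact ⟨a1.le, a2.le⟩
    obtain ⟨ε, hε, hε0⟩ := ((hev.filter_mono nhdsWithin_le_nhds).and
      (self_mem_nhdsWithin : ∀ᶠ ε : ℝ in nhdsWithin 0 (Ioi 0), ε ∈ Ioi (0:ℝ))).exists
    have hε0' : (0:ℝ) < ε := hε0
    have h1 : θ + ε • η ∈ P := fun s hs => (hε s hs).1
    have h2 : θ - ε • η ∈ P := fun s hs => (hε s hs).2
    have hseg : θ ∈ openSegment ℝ (θ + ε • η) (θ - ε • η) := by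
      refine ⟨1 / 2, 1 / 2, by norm_num, by norm_num, by norm_num, ?_⟩
      module
    have := hθP.2 h1 h2 hseg
    have h3 : ε • η = 0 := by simpa using this
    rcases smul_eq_zero.1 h3 with h | h
    · linarith
    · exact hη0 h
  refine ⟨F, θ, M⁻¹, hθ0, by positivity, inv_le_one_of_one_le₀ hM1.le, hF, ?_, hbF, ?_⟩
  · set V := vectorSpan ℝ F with hV
    have hlt : Module.finrank ℝ V < d := by
      have hle : V ≤ (ℝ ∙ θ)ᗮ := by
        rw [hV, vectorSpan, Submodule.span_le]
        rintro _ ⟨x, hx, y, hy, rfl⟩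
        show x -ᵥ y ∈ (ℝ ∙ θ)ᗮ
        rw [Submodule.mem_orthogonal_singleton_iff_inner_right, vsub_eq_sub,
          inner_sub_right, hFeq x hx, hFeq y hy, sub_self]
      have hne' : V ≠ ⊤ := by
        intro h
        have : θ ∈ V := by rw [h]; trivial
        have := Submodule.mem_orthogonal_singleton_iff_inner_right.1 (hle this)
        exact hθ0 (inner_self_eq_zero.1 this)
      have := Submodule.finrank_lt hne'
      simpa using this
    have hge : d ≤ Module.finrank ℝ V + 1 := by
      have hle : (⊤ : Submodule ℝ (E d)) ≤ V ⊔ (ℝ ∙ (b - o)) := by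
        rw [← hspan, Submodule.span_le]
        rintro _ ⟨s, hs, h, rfl⟩
        have hsF : s ∈ F := by
          refine ⟨subset_convexHull ℝ _ hs, fun z hz => ?_⟩
          rw [hl', hl']
          refine (hKle z hz).trans (le_of_eq ?_)
          rw [inner_sub_left] at h
          rw [real_inner_comm o, real_inner_comm s]
          linarith
        have : s - o = (s -ᵥ b) + (b - o) := by rw [vsub_eq_sub]; abel
        rw [SetLike.mem_coe, this]
        exact Submodule.add_mem_sup (vsub_mem_vectorSpan ℝ hsF hbF)
          (Submodule.mem_span_singleton_self _)
      have h1 := Submodule.finrank_mono hle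
      have h2 := Submodule.finrank_add_le_finrank_add_finrank V (ℝ ∙ (b - o))
      have h3 := finrank_span_le_card (R := ℝ) ({b - o} : Set (E d))
      simp only [Set.toFinset_singleton, Finset.card_singleton] at h3
      rw [finrank_top] at h1
      simp only [finrank_euclideanSpace, Fintype.card_fin] at h1
      omega
    omega
  · intro x hx z hz
    rw [real_inner_comm θ z, real_inner_comm θ x, hFeq x hx]
    exact hKle z (subset_convexHull ℝ _ hz)

lemma lattice_ball : ∃ C : ℝ, 1 ≤ C ∧ ∀ (d : ℕ) (c : Fin d → ℝ) (Z : Finset (Fin d → ℕ)),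
    (∀ z ∈ Z, ∑ i, ((z i : ℝ) - c i) ^ 2 ≤ d) → (Z.card : ℝ) ≤ C ^ d := by
  classical
  have hs : Summable fun z : ℤ => (1 / 2 : ℝ) ^ z.natAbs := by
    apply Summable.of_nat_of_neg
    · simpa using summable_geometric_two
    · simpa using summable_geometric_two
  set C0 := ∑' z : ℤ, (1 / 2 : ℝ) ^ z.natAbs with hC0
  have hC1 : 1 ≤ C0 := by
    have := hs.sum_le_tsum {0} (fun _ _ => by positivity)
    rw [hC0]; simpa using this
  refine ⟨8 * C0, by linarith, ?_⟩
  intro d c Z hZ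
  have h1 : ∀ z ∈ Z, (1 / 8 : ℝ) ^ d ≤ ∏ i, (1 / 2 : ℝ) ^ ((z i : ℤ) - ⌊c i⌋).natAbs := by
    intro z hz
    rw [Finset.prod_pow_eq_pow_sum, show (1 / 8 : ℝ) = (1 / 2) ^ 3 by norm_num, ← pow_mul]
    apply pow_le_pow_of_le_one (by norm_num) (by norm_num)
    have h2 : ∀ i, ((((z i : ℤ) - ⌊c i⌋).natAbs : ℕ) : ℝ) ≤ ((z i : ℝ) - c i) ^ 2 + 2 := by
      intro i
      rw [Nat.cast_natAbs]
      push_cast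
      have a1 := Int.floor_le (c i)
      have a2 := Int.lt_floor_add_one (c i)
      rw [abs_le]
      constructor <;> nlinarith [sq_nonneg ((z i : ℝ) - c i - 1), sq_nonneg ((z i : ℝ) - c i + 1)]
    have h3 : ((∑ i, ((z i : ℤ) - ⌊c i⌋).natAbs : ℕ) : ℝ) ≤ ((3 * d : ℕ) : ℝ) := by
      rw [Nat.cast_sum, Nat.cast_mul, Nat.cast_ofNat]
      calc _ ≤ ∑ i, (((z i : ℝ) - c i) ^ 2 + 2) := Finset.sum_le_sum fun i _ => h2 i
        _ = ∑ i, ((z i : ℝ) - c i) ^ 2 + 2 * d := by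
            rw [Finset.sum_add_distrib]; simp; ring
        _ ≤ 3 * d := by linarith [hZ z hz]
    exact_mod_cast h3
  have h2 : (Z.card : ℝ) * (1 / 8) ^ d ≤ C0 ^ d := by
    calc (Z.card : ℝ) * (1 / 8) ^ d
        ≤ ∑ z ∈ Z, ∏ i, (1 / 2 : ℝ) ^ ((z i : ℤ) - ⌊c i⌋).natAbs := by
          rw [← nsmul_eq_mul]; exact Finset.card_nsmul_le_sum _ _ _ h1
      _ ≤ ∑ z ∈ Fintype.piFinset (fun i => Z.image (fun z => z i)),
            ∏ i, (1 / 2 : ℝ) ^ ((z i : ℤ) - ⌊c i⌋).natAbs := by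
          apply Finset.sum_le_sum_of_subset_of_nonneg
          · intro z hz
            rw [Fintype.mem_piFinset]
            intro i
            exact Finset.mem_image_of_mem _ hz
          · intros; positivity
      _ = ∏ i, ∑ k ∈ Z.image (fun z => z i), (1 / 2 : ℝ) ^ ((k : ℤ) - ⌊c i⌋).natAbs := by
          rw [Finset.prod_univ_sum]
      _ ≤ ∏ i : Fin d, C0 := by
          apply Finset.prod_le_prod
          · intros; positivity
          · intro i _
            rw [← Finset.sum_image (f := fun j : ℤ => (1 / 2 : ℝ) ^ j.natAbs)
              (g := fun k : ℕ => (k : ℤ) - ⌊c i⌋)]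
            · exact hs.sum_le_tsum _ (fun _ _ => by positivity)
            · intro a _ b _ h
              simp only at h
              omega
      _ = C0 ^ d := by simp
  rw [mul_pow]
  rw [one_div, inv_pow, ← div_eq_mul_inv, div_le_iff₀ (by positivity)] at h2
  linarith

/-- The affine map taking the cube `[-1,1]^d` to `[0,1]^d`. -/
def ph {d : ℕ} (v : Fin d → ℝ) : E d := WithLp.toLp 2 (fun i => (1 + v i) / 2)

lemma inner_eq_sum {d : ℕ} (x y : E d) : inner ℝ x y = ∑ i, x i * y i := by
  simp [PiLp.inner_apply, mul_comm]

open Classical in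
/-- The vertex set attached to a sample of sign vectors. -/
def verts {d n : ℕ} (ω : Fin n → (Fin d → Bool)) : Finset (E d) :=
  Finset.univ.image fun j => ph fun i => sg (ω j i)

lemma verts_cube {d n : ℕ} (ω : Fin n → (Fin d → Bool)) :
    (↑(verts ω) : Set (E d)) ⊆ cube01 d := by
  intro x hx
  simp only [verts, Finset.coe_image, Set.mem_image] at hx
  obtain ⟨j, _, rfl⟩ := hx
  intro i
  simp only [ph, sg]
  by_cases h : ω j i <;> simp [h]

lemma inner_ph {d : ℕ} (v : Fin d → ℝ) (θ : E d) :
    inner ℝ (ph v) θ = (∑ i, θ i) / 2 + (∑ i, v i * θ i) / 2 := by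
  rw [inner_eq_sum, ← add_div, ← Finset.sum_add_distrib, Finset.sum_div]
  apply Finset.sum_congr rfl
  intro i _
  simp only [ph]
  ring

lemma verts_h_int {d n : ℕ} (ω : Fin n → (Fin d → Bool))
    (h0 : ∀ θ : Fin d → ℝ, θ ≠ 0 → ∃ j, 0 < lf θ (ω j)) :
    ∀ θ : E d, θ ≠ 0 → ∃ s ∈ verts ω, 0 < inner ℝ (s - ph 0) θ := by
  intro θ hθ
  obtain ⟨j, hj⟩ := h0 (fun i => θ i) (by
    intro h
    apply hθ
    ext i
    exact congrFun h i)
  refine ⟨ph fun i => sg (ω j i), ?_, ?_⟩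
  · simp [verts]
  · rw [inner_sub_left, inner_ph, inner_ph]
    simp only [Pi.zero_apply, zero_mul, Finset.sum_const_zero]
    unfold lf at hj
    linarith

lemma min_point {d : ℕ} (K : Set (E d)) (hne : K.Nonempty) (hc : IsClosed K)
    (hK : Convex ℝ K) : ∃ p ∈ K, ∀ v ∈ K, ∑ i, p i ^ 2 ≤ ∑ i, v i * p i := by
  obtain ⟨p, hp, h⟩ := exists_norm_eq_iInf_of_complete_convex hne hc.isComplete hK 0
  rw [norm_eq_iInf_iff_real_inner_le_zero hK hp] at h
  refine ⟨p, hp, fun v hv => ?_⟩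
  have := h v hv
  rw [inner_eq_sum] at this
  have h2 : ∑ i, (0 - p : E d) i * (v - p : E d) i = ∑ i, p i ^ 2 - ∑ i, v i * p i := by
    rw [← Finset.sum_sub_distrib]
    apply Finset.sum_congr rfl
    intro i _
    simp
    ring
  linarith

lemma ph_notMem {d n : ℕ} (ω : Fin n → (Fin d → Bool)) (y : Fin d → ℝ)
    (h : ∀ j, lf y (ω j) < ∑ i, y i ^ 2) : ph y ∉ convexHull ℝ (↑(verts ω) : Set (E d)) := by
  intro hmem
  let θ : E d := WithLp.toLp 2 y
  have hsub : convexHull ℝ (↑(verts ω) : Set (E d)) ⊆ {x | inner ℝ x θ < inner ℝ (ph y) θ} := by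
    apply convexHull_min
    · intro x hx
      simp only [verts, Finset.coe_image, Set.mem_image] at hx
      obtain ⟨j, _, rfl⟩ := hx
      simp only [Set.mem_ofPred_eq]
      rw [inner_ph, inner_ph]
      have := h j
      unfold lf at this
      have e : ∑ i, y i * θ i = ∑ i, y i ^ 2 := by
        apply Finset.sum_congr rfl; intro i _; simp only [θ]; ring
      rw [e]
      have e2 : ∑ i, sg (ω j i) * θ i = ∑ i, sg (ω j i) * y i := rfl
      rw [e2]
      linarith
    · have : IsLinearMap ℝ (fun x : E d => inner ℝ x θ) :=
        ⟨fun x y => inner_add_left _ _ _, fun c x => by simp [inner_smul_left]⟩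
      exact convex_halfSpace_lt this _
  have := hsub hmem
  simp at this

lemma geom_count {d n : ℕ} (hd : 3 ≤ d) (ω : Fin n → (Fin d → Bool)) (η a R2 C : ℝ)
    (hη : 0 < η) (ha : 0 ≤ a) (hR : 0 < R2 - η ^ 2 * d)
    (hC : ∀ (c : Fin d → ℝ) (Z : Finset (Fin d → ℕ)),
      (∀ z ∈ Z, ∑ i, ((z i : ℝ) - c i) ^ 2 ≤ d) → (Z.card : ℝ) ≤ C ^ d)
    (hdrop : ∀ p : Fin d → ℝ, (∀ i, 0 ≤ p i ∧ p i ≤ a) → ∑ i, p i ^ 2 < R2 - η ^ 2 * d →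
      ∀ θ : Fin d → ℝ, θ ≠ 0 → ∃ j, ∑ i, p i * θ i < lf θ (ω j))
    (Y : Finset (Fin d → ℕ)) (hYa : ∀ z ∈ Y, ∀ i, η * z i ≤ a)
    (hYR : ∀ z ∈ Y, ∑ i, (η * z i) ^ 2 = R2)
    (hY : ∀ z ∈ Y, ∀ j, lf (fun i => η * z i) (ω j) < R2) :
    (Y.card : ℝ) ≤ maxFacets01 d * C ^ d := by
  classical
  have h_int := verts_h_int ω (by
    intro θ hθ
    obtain ⟨j, hj⟩ := hdrop 0 (fun i => ⟨le_rfl, ha⟩) (by simpa using hR) θ hθ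
    exact ⟨j, by simpa using hj⟩)
  have hfull := full_dim _ _ h_int
  refine le_trans ?_ (mul_le_mul_of_nonneg_right (Nat.cast_le.2
    (numFacets_le_max _ (verts_cube ω) hfull)) ?_)
  swap
  · have := hC 0 ∅ (by simp)
    simpa using this
  have hex : ∀ z : Fin d → ℕ, ∃ F : Set (E d), z ∈ Y → ∃ (θ : E d) (t : ℝ), θ ≠ 0 ∧ 0 ≤ t ∧ t ≤ 1 ∧
      IsExposed ℝ (convexHull ℝ (↑(verts ω) : Set (E d))) F ∧
      Module.finrank ℝ (vectorSpan ℝ F) = d - 1 ∧ ph (fun i => t * (η * z i)) ∈ F ∧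
      ∀ x ∈ F, ∀ z ∈ verts ω, inner ℝ z θ ≤ inner ℝ x θ := by
    intro z
    by_cases hz : z ∈ Y
    · obtain ⟨F, θ, t, h1, h2, h3, h4, h5, h6, h7⟩ := facet_exists (by omega) (verts ω) (ph 0)
        (ph fun i => η * z i) h_int (ph_notMem ω _ fun j => by rw [hYR z hz]; exact hY z hz j)
      refine ⟨F, fun _ => ⟨θ, t, h1, h2, h3, h4, h5, ?_, h7⟩⟩
      convert h6 using 1
      ext i
      simp [ph]
      ring
    · exact ⟨∅, fun h => absurd h hz⟩
  choose Fz hFz using hex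
  have hfin : {F : Set (E d) | F.Nonempty ∧ IsExposed ℝ (convexHull ℝ (↑(verts ω) : Set (E d))) F ∧
    Module.finrank ℝ (vectorSpan ℝ F) = d - 1}.Finite :=
    (exposed_finite (verts ω)).subset fun F hF => hF.2.1
  have hnum : (Y.image Fz).card ≤ numFacets d (convexHull ℝ (↑(verts ω) : Set (E d))) := by
    unfold numFacets
    rw [← Set.ncard_coe_finset]
    apply Set.ncard_le_ncard _ hfin
    intro F hF
    simp only [Finset.coe_image, Set.mem_image, Finset.mem_coe] at hF
    obtain ⟨z, hz, rfl⟩ := hF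
    obtain ⟨θ, t, h1, h2, h3, h4, h5, h6, h7⟩ := hFz z hz
    exact ⟨⟨_, h6⟩, h4, h5⟩
  have hfib : ∀ F ∈ Y.image Fz, ((Y.filter fun z => Fz z = F).card : ℝ) ≤ C ^ d := by
    intro F hF
    obtain ⟨z0, hz0, rfl⟩ := Finset.mem_image.1 hF
    obtain ⟨θ, t0, h1, h2, h3, h4, h5, h6, h7⟩ := hFz z0 hz0
    set F := Fz z0 with hF0
    have hcl : IsClosed (convexHull ℝ (↑(verts ω) : Set (E d))) :=
      ((verts ω).finite_toSet.isCompact_convexHull ℝ).isClosed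
    let K : Set (E d) := {v | ph (fun i => v i) ∈ F ∧ ∀ i, 0 ≤ v i ∧ v i ≤ a}
    have hKin : ∀ z ∈ Y, Fz z = F → ∃ t : ℝ, 0 ≤ t ∧ t ≤ 1 ∧
        (WithLp.toLp 2 (fun i => t * (η * z i)) : E d) ∈ K := by
      intro z hz hzF
      obtain ⟨θ', t, g1, g2, g3, g4, g5, g6, g7⟩ := hFz z hz
      refine ⟨t, g2, g3, hzF ▸ g6, fun i => ⟨by simp only; positivity, ?_⟩⟩
      have := hYa z hz i
      have h0 : 0 ≤ η * z i := by positivity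
      simp only
      nlinarith
    have hKcl : IsClosed K := by
      have hKe : K = (fun v : E d => ph (fun i => v i)) ⁻¹' F ∩
          ⋂ i, ({v : E d | 0 ≤ v i} ∩ {v : E d | v i ≤ a}) := by
        ext v
        simp [K]
      rw [hKe]
      apply IsClosed.inter
      · refine (h4.isClosed hcl).preimage ?_
        unfold ph
        fun_prop
      · refine isClosed_iInter fun i => ?_
        exact (isClosed_le continuous_const (by fun_prop)).inter
          (isClosed_le (by fun_prop) continuous_const)
    have hKconv : Convex ℝ K := by
      intro u hu v hv s r hs hr hsr
      refine ⟨?_, fun i => ⟨?_, ?_⟩⟩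
      · have := (h4.convex (convex_convexHull ℝ _)) hu.1 hv.1 hs hr hsr
        convert this using 1
        ext i
        simp [ph]
        linear_combination (-1/2) * hsr
      · have := (hu.2 i).1
        have := (hv.2 i).1
        simp
        positivity
      · have e1 := (hu.2 i).2
        have e2 := (hv.2 i).2
        simp
        calc s * u i + r * v i ≤ s * a + r * a := by gcongr
          _ = a := by rw [← add_mul, hsr, one_mul]
    obtain ⟨t1, _, _, ht1⟩ := hKin z0 hz0 rfl
    obtain ⟨p, hpK, hp⟩ := min_point K ⟨_, ht1⟩ hKcl hKconv
    have hpR : R2 - η ^ 2 * d ≤ ∑ i, p i ^ 2 := by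
      by_contra hcon
      push Not at hcon
      obtain ⟨j, hj⟩ := hdrop (fun i => p i) hpK.2 hcon (fun i => θ i) (by
        intro h
        apply h1
        ext i
        exact congrFun h i)
      have := h7 _ hpK.1 (ph fun i => sg (ω j i)) (by simp [verts])
      rw [inner_ph, inner_ph] at this
      unfold lf at hj
      linarith
    apply hC (fun i => p i / η)
    intro z hz
    rw [Finset.mem_filter] at hz
    obtain ⟨t, ht0, ht1, htK⟩ := hKin z hz.1 hz.2
    have g1 := hp _ htK
    have g2 : ∑ i, t * (η * z i) * p i ≤ ∑ i, η * z i * p i := by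
      apply Finset.sum_le_sum
      intro i _
      have e0 := (hpK.2 i).1
      have : 0 ≤ η * z i * p i := by positivity
      nlinarith
    have g3 := hYR z hz.1
    have g4 : η ^ 2 * ∑ i, ((z i : ℝ) - p i / η) ^ 2 =
        ∑ i, (η * z i) ^ 2 - 2 * ∑ i, η * z i * p i + ∑ i, p i ^ 2 := by
      rw [Finset.mul_sum, Finset.mul_sum, ← Finset.sum_sub_distrib, ← Finset.sum_add_distrib]
      apply Finset.sum_congr rfl
      intro i _
      field_simp
      ring
    simp only at g1
    have g5 : η ^ 2 * ∑ i, ((z i : ℝ) - p i / η) ^ 2 ≤ η ^ 2 * d := by linarith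
    exact le_of_mul_le_mul_left g5 (by positivity)
  have hC0 : 0 ≤ C ^ d := by simpa using hC 0 ∅ (by simp)
  calc (Y.card : ℝ) = ∑ F ∈ Y.image Fz, ((Y.filter fun z => Fz z = F).card : ℝ) := by
        rw [Finset.card_eq_sum_card_image Fz Y]; push_cast; rfl
    _ ≤ ∑ F ∈ Y.image Fz, C ^ d := Finset.sum_le_sum hfib
    _ = (Y.image Fz).card * C ^ d := by simp
    _ ≤ _ := by gcongr

lemma mem_HS {d : ℕ} (θ : Fin d → ℝ) (s : ℝ) :
    (Finset.univ.filter fun σ => s < lf θ σ) ∈ HS d := by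
  classical
  unfold HS
  rw [Finset.mem_filter]
  exact ⟨Finset.mem_univ _, θ, s, fun σ => by simp⟩

lemma main_count {d M : ℕ} (C : ℝ) (hd : 3 ≤ d) (hM : 2 ≤ M)
    (hMd : 4096 * (M : ℝ) ^ 4 * Real.log d ≤ d)
    (hC : ∀ (c : Fin d → ℝ) (Z : Finset (Fin d → ℕ)),
      (∀ z ∈ Z, ∑ i, ((z i : ℝ) - c i) ^ 2 ≤ d) → (Z.card : ℝ) ≤ C ^ d) :
    (M : ℝ) ^ d ≤ 2 * (4 * d * M ^ 2 + 1) * (maxFacets01 d * C ^ d) := by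
  classical
  set L := Real.log d with hLdef
  have hd3 : (3:ℝ) ≤ d := by exact_mod_cast hd
  have hd0 : (0:ℝ) < d := by linarith
  have hM2 : (2:ℝ) ≤ M := by exact_mod_cast hM
  have hL1 : 1 ≤ L := by
    rw [hLdef, Real.le_log_iff_exp_le hd0]
    linarith [Real.exp_one_lt_d9]
  have hexpL : Real.exp L = d := Real.exp_log hd0
  have hM4 : (16:ℝ) ≤ (M:ℝ) ^ 4 := by
    calc (16:ℝ) = 2 ^ 4 := by norm_num
      _ ≤ _ := by gcongr
  have hLd : 65536 * L ≤ d := by nlinarith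
  have hdbig : (65536:ℝ) ≤ d := by linarith
  set η := Real.sqrt (20 * L / d) with hη
  have hη0 : 0 < η := by rw [hη]; positivity
  have hη2 : η ^ 2 = 20 * L / d := Real.sq_sqrt (by positivity)
  have hηd : η ^ 2 * d = 20 * L := by rw [hη2]; field_simp
  set a := 2 * M * η with ha
  have ha0 : 0 ≤ a := by positivity
  have ha4 : d * a ^ 4 ≤ 25 / 16 * L := by
    have : a ^ 4 = 16 * M ^ 4 * (η ^ 2) ^ 2 := by rw [ha]; ring
    rw [this, hη2]
    have e : (d:ℝ) * (16 * M ^ 4 * (20 * L / d) ^ 2) = (4096 * M ^ 4 * L) * (25 / 16 * L) / d := by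
      field_simp; ring
    rw [e, div_le_iff₀ hd0]
    nlinarith
  have ha1 : a < 1 := by
    have : a ^ 4 < 1 := by
      by_contra h
      push Not at h
      nlinarith
    exact (pow_lt_one_iff_of_nonneg ha0 (by norm_num)).1 this
  -- pigeonhole on the squared length
  let grid : Finset (Fin d → ℕ) := Fintype.piFinset fun _ => Finset.Ico M (2 * M)
  have hgc : grid.card = M ^ d := by
    simp only [grid, Fintype.card_piFinset, Nat.card_Ico, Finset.prod_const, Finset.card_univ,
      Fintype.card_fin]
    congr 1
    omega
  have hgm : ∀ z ∈ grid, ∀ i, M ≤ z i ∧ z i ≤ 2 * M := by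
    intro z hz i
    have := Finset.mem_Ico.1 (Fintype.mem_piFinset.1 hz i)
    omega
  obtain ⟨T, _, hT⟩ := Finset.exists_le_card_fiber_of_nsmul_le_card_of_maps_to
    (s := grid) (t := Finset.range (4 * d * M ^ 2 + 1)) (f := fun z => ∑ i, z i ^ 2)
    (b := (M:ℝ) ^ d / (4 * d * M ^ 2 + 1)) (by
      intro z hz
      rw [Finset.mem_range, Nat.lt_succ_iff]
      calc ∑ i, z i ^ 2 ≤ ∑ i : Fin d, (2 * M) ^ 2 :=
            Finset.sum_le_sum fun i _ => Nat.pow_le_pow_left (hgm z hz i).2 2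
        _ = 4 * d * M ^ 2 := by simp; ring) (by simp) (by
      rw [hgc, nsmul_eq_mul, Finset.card_range]
      push_cast
      rw [mul_div_cancel₀]
      positivity)
  set Y := grid.filter (fun z => ∑ i, z i ^ 2 = T) with hY
  have hMpos : (0:ℝ) < M := by linarith
  have hYne : Y.Nonempty := by
    rw [← Finset.card_pos]
    have : (0:ℝ) < Y.card := lt_of_lt_of_le (by positivity) hT
    exact_mod_cast this
  set R2 := η ^ 2 * T with hR2
  have hYR : ∀ z ∈ Y, ∑ i, (η * z i) ^ 2 = R2 := by
    intro z hz
    have h := (Finset.mem_filter.1 hz).2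
    rw [hR2, ← h]
    push_cast
    rw [Finset.mul_sum]
    exact Finset.sum_congr rfl fun i _ => by ring
  have hR80 : 80 * L ≤ R2 := by
    obtain ⟨z, hz⟩ := hYne
    have hz' := Finset.mem_filter.1 hz
    have h1 : (d * M ^ 2 : ℝ) ≤ T := by
      have : d * M ^ 2 ≤ T := by
        rw [← hz'.2]
        calc d * M ^ 2 = ∑ i : Fin d, M ^ 2 := by simp
          _ ≤ _ := Finset.sum_le_sum fun i _ => Nat.pow_le_pow_left (hgm z hz'.1 i).1 2
      exact_mod_cast this
    calc 80 * L ≤ 20 * L * M ^ 2 := by nlinarith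
      _ = η ^ 2 * (d * M ^ 2) := by rw [← hηd]; ring
      _ ≤ _ := by rw [hR2]; gcongr
  -- sampling
  set e := Real.exp (R2 / 2) with he
  have he8 : 8 ≤ e := by linarith [Real.add_one_le_exp (R2 / 2)]
  set n := ⌊e / 4⌋₊ with hn
  have hn1 : (n:ℝ) ≤ e / 4 := Nat.floor_le (by positivity)
  have hn2 : e / 8 ≤ n := by
    have := Nat.lt_floor_add_one (e / 4)
    linarith
  set q := Real.exp (-((R2 - 20 * L) / 2 + L)) / (8 * (d:ℝ) ^ 5) with hq
  have hqn : (d:ℝ) ^ 4 / 64 ≤ q * n := by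
    calc (d:ℝ) ^ 4 / 64 = q * (e / 8) := by
          have h9 : Real.exp (-((R2 - 20 * L) / 2 + L)) * e = (d:ℝ) ^ 9 := by
            rw [he, ← Real.exp_add, ← hexpL, ← Real.exp_nat_mul]
            congr 1
            push_cast
            ring
          have : q * (e / 8) = (Real.exp (-((R2 - 20 * L) / 2 + L)) * e) / (64 * d ^ 5) := by
            rw [hq]; field_simp; ring
          rw [this, h9]
          field_simp
      _ ≤ _ := by gcongr
  have hq4 : (2:ℝ) ^ ((d + 1) ^ 2) * Real.exp (-(q * n)) ≤ 1 / 4 := by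
    have h2e : (2:ℝ) ≤ Real.exp 1 := by linarith [Real.add_one_le_exp (1:ℝ)]
    calc (2:ℝ) ^ ((d + 1) ^ 2) * Real.exp (-(q * n))
        ≤ (Real.exp 1) ^ ((d + 1) ^ 2) * Real.exp (-((d:ℝ) ^ 4 / 64)) := by gcongr
      _ = Real.exp (((d:ℝ) + 1) ^ 2 - (d:ℝ) ^ 4 / 64) := by
          rw [← Real.exp_nat_mul, ← Real.exp_add]
          congr 1
          push_cast
          ring
      _ ≤ Real.exp (-2) := by
          apply Real.exp_le_exp.2
          have : (65536:ℝ) ^ 2 ≤ (d:ℝ) ^ 2 := by gcongr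
          nlinarith
      _ = (Real.exp 1 ^ 2)⁻¹ := by
          rw [← Real.exp_nat_mul, ← Real.exp_neg]; norm_num
      _ ≤ ((2:ℝ) ^ 2)⁻¹ := by gcongr
      _ = 1 / 4 := by norm_num
  obtain ⟨ω, hω, Y', hY', hYcard, hYω⟩ := exists_sample (n := n) Y
    (fun z => Finset.univ.filter fun σ => ∑ i, (η * z i) ^ 2 ≤ lf (fun i => η * z i) σ)
    q (Real.exp (-R2 / 2)) (by
      intro z hz
      have := hoeffding (fun i => η * (z i : ℝ))
      rw [hYR z hz] at this
      simpa only [hYR z hz] using this) (by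
      have : Real.exp (-R2 / 2) = e⁻¹ := by rw [he, ← Real.exp_neg]; congr 1; ring
      rw [this, ← div_eq_mul_inv, div_le_iff₀ (by positivity)]
      linarith) hq4
  have hmain := geom_count hd ω η a R2 C hη0 ha0 (by rw [hηd]; linarith) hC (by
    intro p hp hpR θ hθ
    rw [hηd] at hpR
    have hlow := halfspace_lower hd θ p hθ (fun i => by
      rw [abs_of_nonneg (hp i).1]; linarith [(hp i).2])
    obtain ⟨j, hj⟩ := hω _ (mem_HS θ (∑ i, p i * θ i)) (by
      refine le_trans ?_ hlow
      rw [hq]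
      gcongr
      rw [Finset.sum_add_distrib, ← Finset.sum_div, ← Finset.sum_div]
      have : ∑ i, p i ^ 4 ≤ d * a ^ 4 := by
        calc ∑ i, p i ^ 4 ≤ ∑ i : Fin d, a ^ 4 :=
              Finset.sum_le_sum fun i _ => pow_le_pow_left₀ (hp i).1 (hp i).2 4
          _ = _ := by simp
      linarith)
    exact ⟨j, by simpa using hj⟩) Y' (by
      intro z hz i
      have h1 : (z i : ℝ) ≤ 2 * M := by
        exact_mod_cast (hgm z (Finset.mem_filter.1 (hY' hz)).1 i).2
      rw [ha]
      nlinarith) (fun z hz => hYR z (hY' hz)) (by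
      intro z hz j
      have := hYω z hz j
      rw [Finset.mem_filter] at this
      have h2 := hYR z (hY' hz)
      by_contra hcon
      push Not at hcon
      exact this ⟨Finset.mem_univ _, by rw [h2]; exact hcon⟩)
  have hYc : (Y.card : ℝ) ≤ 2 * Y'.card := by exact_mod_cast hYcard
  have hpos : (0:ℝ) < 4 * d * M ^ 2 + 1 := by positivity
  rw [div_le_iff₀ hpos] at hT
  calc (M:ℝ) ^ d ≤ Y.card * (4 * d * M ^ 2 + 1) := hT
    _ ≤ (2 * (maxFacets01 d * C ^ d)) * (4 * d * M ^ 2 + 1) := by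
        gcongr
        linarith
    _ = _ := by ring

lemma maxFacets_pos {d : ℕ} (hd : 1 ≤ d) : 1 ≤ maxFacets01 d := by
  classical
  let ω : Fin (Fintype.card (Fin d → Bool)) → (Fin d → Bool) := (Fintype.equivFin _).symm
  have h0 : ∀ θ : Fin d → ℝ, θ ≠ 0 → ∃ j, 0 < lf θ (ω j) := by
    intro θ hθ
    refine ⟨Fintype.equivFin _ (fun i => decide (0 < θ i)), ?_⟩
    simp only [ω, Equiv.symm_apply_apply]
    have he : ∀ i, sg (decide (0 < θ i)) * θ i = |θ i| := by
      intro i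
      unfold sg
      by_cases h : 0 < θ i
      · simp [h, abs_of_pos h]
      · simp [h, abs_of_nonpos (not_lt.1 h)]
    unfold lf
    simp only [he]
    obtain ⟨i, hi⟩ := Function.ne_iff.1 hθ
    exact Finset.sum_pos' (fun i _ => abs_nonneg _) ⟨i, Finset.mem_univ _, abs_pos.2 hi⟩
  have h_int := verts_h_int ω h0
  have hfull := full_dim _ _ h_int
  refine le_trans ?_ (numFacets_le_max _ (verts_cube ω) hfull)
  have hw : ph (fun _ : Fin d => (2:ℝ)) ∉ convexHull ℝ (↑(verts ω) : Set (E d)) := by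
    apply ph_notMem
    intro j
    unfold lf
    have : Nonempty (Fin d) := ⟨⟨0, hd⟩⟩
    apply Finset.sum_lt_sum_of_nonempty Finset.univ_nonempty
    intro i _
    unfold sg
    split_ifs <;> norm_num
  obtain ⟨F, θ, t, h1, h2, h3, h4, h5, h6, h7⟩ := facet_exists hd (verts ω) (ph 0) _ h_int hw
  unfold numFacets
  rw [Nat.one_le_iff_ne_zero, Ne, Set.ncard_eq_zero
    ((exposed_finite (verts ω)).subset fun F hF => hF.2.1)]
  intro hempty
  have : F ∈ (∅ : Set (Set (E d))) := hempty ▸ ⟨⟨_, h6⟩, h4, h5⟩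
  exact this

/-- Theorem 5.1 (Bárány–Pór): there is `c > 0` such that for all `d ≥ 2`,
`G(d) ≥ (c d / log d)^{d/4}`. -/
theorem maxFacets01_lower_bound :
    ∃ c : ℝ, 0 < c ∧ ∀ d : ℕ, 2 ≤ d →
      (c * d / Real.log d) ^ ((d : ℝ) / 4) ≤ (maxFacets01 d : ℝ) := by
  obtain ⟨C, hC1, hC⟩ := lattice_ball
  refine ⟨(1 / (512 * C)) ^ 4, by positivity, ?_⟩
  intro d hd
  have hd2 : (2:ℝ) ≤ d := by exact_mod_cast hd
  have hd0 : (0:ℝ) < d := by linarith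
  have hL0 : 0 < Real.log d := Real.log_pos (by linarith)
  set L := Real.log d with hL
  have hG1 : (1:ℝ) ≤ maxFacets01 d := by exact_mod_cast maxFacets_pos (d := d) (by omega)
  have hCpos : 0 < C := by linarith
  by_cases hcase : (d:ℝ) < 65536 * L
  · refine le_trans (Real.rpow_le_one (by positivity) ?_ (by positivity)) hG1
    rw [div_le_one hL0]
    have : (1 / (512 * C)) ^ 4 ≤ (1 / 512 : ℝ) ^ 4 := by
      gcongr
      linarith
    have h3 : (1 / 512 : ℝ) ^ 4 * 65536 ≤ 1 := by norm_num
    nlinarith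
  · push Not at hcase
    set x := d / (4096 * L) with hx
    have hx16 : 16 ≤ x := by rw [hx, le_div_iff₀ (by positivity)]; linarith
    have hx0 : 0 ≤ x := by linarith
    set r := x ^ (1 / 4 : ℝ) with hr
    have hr0 : 0 ≤ r := by positivity
    have hr4 : r ^ 4 = x := by
      rw [hr, ← Real.rpow_natCast, ← Real.rpow_mul hx0]; norm_num
    have hr2 : 2 ≤ r := by
      by_contra h
      push Not at h
      have : r ^ 4 < 2 ^ 4 := by gcongr
      linarith
    set M := ⌊r⌋₊ with hM
    have hMr : (M:ℝ) ≤ r := Nat.floor_le hr0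
    have hM2 : 2 ≤ M := Nat.le_floor (by exact_mod_cast hr2)
    have hM2' : (2:ℝ) ≤ M := by exact_mod_cast hM2
    have hrM : r ≤ 2 * M := by
      have := Nat.lt_floor_add_one r
      linarith
    have hM4 : (M:ℝ) ^ 4 ≤ x := by rw [← hr4]; gcongr
    have hMd : 4096 * (M:ℝ) ^ 4 * L ≤ d := by
      rw [hx, le_div_iff₀ (by positivity)] at hM4
      linarith
    have hd3 : 3 ≤ d := by
      have h1 : 65536 * Real.log 2 ≤ 65536 * L := by
        have := Real.log_le_log (by norm_num) hd2
        linarith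
      have := Real.log_two_gt_d9
      have : (3:ℝ) ≤ d := by linarith
      exact_mod_cast this
    have hmain := main_count C hd3 hM2 hMd (hC d)
    -- bound the polynomial factor
    have hpoly : (2:ℝ) * (4 * d * M ^ 2 + 1) ≤ 32 ^ d := by
      have hMd' : (M:ℝ) ^ 2 ≤ d := by
        have hL1 : 1 ≤ L := by
          rw [hL, Real.le_log_iff_exp_le hd0]
          have : (3:ℝ) ≤ d := by exact_mod_cast hd3
          linarith [Real.exp_one_lt_d9]
        have : (1:ℝ) ≤ M ^ 2 := by nlinarith
        nlinarith [mul_nonneg (pow_nonneg (by linarith : (0:ℝ) ≤ M) 4) (by linarith : 0 ≤ L - 1)]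
      have h2 : (d:ℝ) + 1 ≤ 2 ^ d := by
        have := Nat.lt_two_pow_self (n := d)
        exact_mod_cast this
      have h8 : (8:ℝ) ≤ 8 ^ d := by
        calc (8:ℝ) = 8 ^ 1 := by norm_num
          _ ≤ _ := pow_le_pow_right₀ (by norm_num) (by omega)
      calc (2:ℝ) * (4 * d * M ^ 2 + 1) ≤ 2 * (4 * d * d + 1) := by gcongr
        _ ≤ 8 * ((d + 1) * (d + 1)) := by nlinarith
        _ ≤ 8 ^ d * (2 ^ d * 2 ^ d) := by gcongr
        _ = 32 ^ d := by rw [← mul_pow, ← mul_pow]; norm_num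
    have hfin : (M:ℝ) ^ d ≤ (32 * C) ^ d * maxFacets01 d := by
      calc (M:ℝ) ^ d ≤ 2 * (4 * d * M ^ 2 + 1) * (maxFacets01 d * C ^ d) := hmain
        _ ≤ 32 ^ d * (maxFacets01 d * C ^ d) := by gcongr
        _ = _ := by rw [mul_pow]; ring
    have hkey : (1 / (512 * C)) ^ 4 * d / L = (r / (64 * C)) ^ 4 := by
      rw [div_pow r, hr4, hx]
      field_simp
      norm_num
    rw [hkey]
    have hpow : ((r / (64 * C)) ^ 4) ^ ((d:ℝ) / 4) = (r / (64 * C)) ^ d := by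
      rw [← Real.rpow_natCast, ← Real.rpow_mul (by positivity), ← Real.rpow_natCast]
      congr 1
      push_cast
      ring
    rw [hpow]
    calc (r / (64 * C)) ^ d ≤ (2 * M / (64 * C)) ^ d := by gcongr
      _ = (M / (32 * C)) ^ d := by congr 1; field_simp; norm_num
      _ = M ^ d / (32 * C) ^ d := by rw [div_pow]
      _ ≤ maxFacets01 d := by
          rw [div_le_iff₀ (by positivity)]
          linarith
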